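/- For every integer n ≥ 1, the theory PA⁻ + IΣn + CARD(Σ_{n+1}) does not prove GPHP(Σ_{n+1}): there exists a model N of PA⁻ + IΣn satisfying CARD(Σ_{n+1}) together with an element a ∈ N such that for every b ∈ N there is a Σ_{n+1}-definable injection from [0,b) into [0,a). -/

import Mathlib

/- Shared development: first-order arithmetic in the language {0,1,+,·,<},
   the arithmetic hierarchy, fragments of arithmetic, and coded finite
   combinatorics inside models. -/

open FirstOrder Language

namespace ArithFC

/-- Function symbols of the language of arithmetic: 0, 1, +, ·. -/
inductive Func : ℕ → Type
  | zero : Func 0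
  | one : Func 0
  | add : Func 2
  | mul : Func 2

/-- Relation symbols of the language of arithmetic: <. -/
inductive Rel : ℕ → Type
  | lt : Rel 2

/-- The first-order language {0, 1, +, ·, <}. -/
def lang : Language :=
  { Functions := Func, Relations := Rel }

section Instances

variable (M : Type) [lang.Structure M]

instance : Zero M := ⟨Structure.funMap (L := lang) Func.zero ![]⟩
instance : One M := ⟨Structure.funMap (L := lang) Func.one ![]⟩
instance : Add M := ⟨fun x y => Structure.funMap (L := lang) Func.add ![x, y]⟩
instance : Mul M := ⟨fun x y => Structure.funMap (L := lang) Func.mul ![x, y]⟩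
instance : LT M := ⟨fun x y => Structure.RelMap (L := lang) Rel.lt ![x, y]⟩
instance : LE M := ⟨fun x y => x < y ∨ x = y⟩

end Instances

/-- The numeral `n` in a model. -/
def numM (M : Type) [lang.Structure M] : ℕ → M
  | 0 => 0
  | n + 1 => numM M n + 1

/-- `b` is nonstandard (greater than every numeral). -/
def Nonstd {M : Type} [lang.Structure M] (b : M) : Prop := ∀ n : ℕ, numM M n < b

/-- The atomic formula `t < u`. -/
def ltFm {α : Type} {n : ℕ} (t u : lang.Term (α ⊕ Fin n)) : lang.BoundedFormula α n :=
  BoundedFormula.rel (Rel.lt : lang.Relations 2) ![t, u]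

/-- Δ₀ formulas: built from atomic formulas by boolean connectives and
bounded universal quantification (this generates, up to logical equivalence,
the usual class of bounded formulas). -/
inductive IsDelta0 {α : Type} : ∀ n : ℕ, lang.BoundedFormula α n → Prop
  | falsum (n : ℕ) : IsDelta0 n BoundedFormula.falsum
  | equal (n : ℕ) (t u : lang.Term (α ⊕ Fin n)) : IsDelta0 n (BoundedFormula.equal t u)
  | rel (n l : ℕ) (R : lang.Relations l) (ts : Fin l → lang.Term (α ⊕ Fin n)) :
      IsDelta0 n (BoundedFormula.rel R ts)
  | imp (n : ℕ) {φ ψ : lang.BoundedFormula α n} :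
      IsDelta0 n φ → IsDelta0 n ψ → IsDelta0 n (φ.imp ψ)
  | bdAll (n : ℕ) (t : lang.Term (α ⊕ Fin n)) {φ : lang.BoundedFormula α (n + 1)} :
      IsDelta0 (n + 1) φ →
      IsDelta0 n
        (BoundedFormula.all ((ltFm (Term.var (Sum.inr (Fin.last n))) (t.liftAt 1 n)).imp φ))

mutual
  /-- Σ_m formulas. -/
  inductive SigmaFm {α : Type} : ℕ → ∀ n : ℕ, lang.BoundedFormula α n → Prop
    | delta0 (m n : ℕ) {φ : lang.BoundedFormula α n} : IsDelta0 n φ → SigmaFm m n φ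
    | ofPi (m n : ℕ) {φ : lang.BoundedFormula α n} : PiFm m n φ → SigmaFm (m + 1) n φ
    | ex (m n : ℕ) {φ : lang.BoundedFormula α (n + 1)} :
        SigmaFm (m + 1) (n + 1) φ → SigmaFm (m + 1) n φ.ex
  /-- Π_m formulas. -/
  inductive PiFm {α : Type} : ℕ → ∀ n : ℕ, lang.BoundedFormula α n → Prop
    | delta0 (m n : ℕ) {φ : lang.BoundedFormula α n} : IsDelta0 n φ → PiFm m n φ
    | ofSigma (m n : ℕ) {φ : lang.BoundedFormula α n} : SigmaFm m n φ → PiFm (m + 1) n φ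
    | all (m n : ℕ) {φ : lang.BoundedFormula α (n + 1)} :
        PiFm (m + 1) (n + 1) φ → PiFm (m + 1) n φ.all
end

/-- A `k`-ary relation on `M` is Σ_m-definable (with parameters from `M`). -/
def IsSigmaDef (m : ℕ) (M : Type) [lang.Structure M] {k : ℕ} (R : (Fin k → M) → Prop) : Prop :=
  ∃ (p : ℕ) (φ : lang.BoundedFormula (Fin k ⊕ Fin p) 0) (w : Fin p → M),
    SigmaFm m 0 φ ∧ ∀ v : Fin k → M, R v ↔ φ.Realize (Sum.elim v w) finZeroElim

/-- A subset of `M` is Σ_m-definable with parameters. -/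
def SigmaDef1 (m : ℕ) (M : Type) [lang.Structure M] (A : Set M) : Prop :=
  IsSigmaDef m M (k := 1) fun v => v 0 ∈ A

/-- A binary relation on `M` is Σ_m-definable with parameters. -/
def SigmaDef2 (m : ℕ) (M : Type) [lang.Structure M] (R : M → M → Prop) : Prop :=
  IsSigmaDef m M (k := 2) fun v => R (v 0) (v 1)

/-- A ternary relation on `M` is Σ_m-definable with parameters. -/
def SigmaDef3 (m : ℕ) (M : Type) [lang.Structure M] (R : M → M → M → Prop) : Prop :=
  IsSigmaDef m M (k := 3) fun v => R (v 0) (v 1) (v 2)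

/-- `M` is a model of PA⁻ (the nonnegative part of a discretely ordered
commutative semiring). -/
structure PAm (M : Type) [lang.Structure M] : Prop where
  add_assoc : ∀ x y z : M, x + y + z = x + (y + z)
  add_comm : ∀ x y : M, x + y = y + x
  mul_assoc : ∀ x y z : M, x * y * z = x * (y * z)
  mul_comm : ∀ x y : M, x * y = y * x
  ldistrib : ∀ x y z : M, x * (y + z) = x * y + x * z
  add_zero : ∀ x : M, x + 0 = x
  mul_zero : ∀ x : M, x * 0 = 0
  mul_one : ∀ x : M, x * 1 = x
  lt_trans : ∀ x y z : M, x < y → y < z → x < z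
  lt_irrefl : ∀ x : M, ¬x < x
  lt_total : ∀ x y : M, x < y ∨ x = y ∨ y < x
  add_lt_add : ∀ x y z : M, x < y → x + z < y + z
  mul_lt_mul : ∀ x y z : M, x < y → 0 < z → x * z < y * z
  sub_exists : ∀ x y : M, x < y → ∃ z, x + z = y
  zero_lt_one : (0 : M) < 1
  discrete : ∀ x : M, 0 < x → (1 : M) ≤ x
  zero_le : ∀ x : M, (0 : M) ≤ x

/-- `M` satisfies the Σ_m-induction scheme (with parameters). -/
def ISig (m : ℕ) (M : Type) [lang.Structure M] : Prop :=
  ∀ A : Set M, SigmaDef1 m M A → (0 : M) ∈ A → (∀ x, x ∈ A → x + 1 ∈ A) → ∀ x, x ∈ A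

/-- `M` satisfies the Σ_m-collection (bounding) scheme (with parameters). -/
def BSig (m : ℕ) (M : Type) [lang.Structure M] : Prop :=
  ∀ R : M → M → Prop, SigmaDef2 m M R → ∀ a : M,
    (∀ x, x < a → ∃ y, R x y) → ∃ b, ∀ x, x < a → ∃ y, y < b ∧ R x y

section Coding

variable {M : Type} [lang.Structure M]

/-- `z` is the Cantor pair `⟨x, y⟩`: `2z = (x+y)(x+y+1) + 2y`. -/
def IsPairC (z x y : M) : Prop := z + z = (x + y) * (x + y + 1) + (y + y)

/-- Gödel's β-function: `x = a mod ((i+1)·b + 1)`. -/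
def BetaC (a b i x : M) : Prop :=
  x < (i + 1) * b + 1 ∧ ∃ q, a = q * ((i + 1) * b + 1) + x

/-- The sequence coded by `s` (via a Cantor pair of β-function data) has value `x`
at place `i`. -/
def SeqAt (s i x : M) : Prop := ∃ a b, IsPairC s a b ∧ BetaC a b i x

/-- `c` codes the M-finite set `X` of cardinality `card`: `c = ⟨card, s⟩` where `s`
codes the strictly increasing enumeration of `X` of length `card`. -/
def CodesFinset (c : M) (X : Set M) (card : M) : Prop :=
  ∃ s, IsPairC c card s ∧
    (∀ i, i < card → ∃ x, x ∈ X ∧ SeqAt s i x) ∧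
    (∀ i j x y, i < j → j < card → SeqAt s i x → SeqAt s j y → x < y) ∧
    (∀ x, x ∈ X ↔ ∃ i, i < card ∧ SeqAt s i x)

/-- `X` is an M-finite (coded) set. -/
def MFinite (X : Set M) : Prop := ∃ c card : M, CodesFinset c X card

/-- `d` codes an `e`-element subset `D` of `[0, y)`, i.e. an element of `[y]^e`. -/
def CodesTupleIn (d e y : M) (D : Set M) : Prop :=
  CodesFinset d D e ∧ ∀ z ∈ D, z < y

/-- `f` codes a (finite) function defined on all of `[0, a)`. -/
def CodesFunOn (f a : M) : Prop :=
  ∀ x, x < a → (∃ y, SeqAt f x y) ∧ ∀ y y', SeqAt f x y → SeqAt f x y' → y = y'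

/-- `X` is an M-coded subset of `[0, a)`. -/
def MCodedSubset (a : M) (X : Set M) : Prop :=
  MFinite X ∧ ∀ x ∈ X, x < a

end Coding

/-- An `M`-ultrafilter on `a`: an ultrafilter of the Boolean algebra of
M-finite subsets of `[0, a)`. -/
structure MUltra (M : Type) [lang.Structure M] (a : M) where
  sets : Set (Set M)
  mem_coded : ∀ X ∈ sets, MCodedSubset a X
  univ_mem : {x : M | x < a} ∈ sets
  superset_mem : ∀ X Y : Set M, X ∈ sets → MCodedSubset a Y → X ⊆ Y → Y ∈ sets
  inter_mem : ∀ X Y : Set M, X ∈ sets → Y ∈ sets → X ∩ Y ∈ sets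
  empty_not_mem : (∅ : Set M) ∉ sets
  ultra : ∀ X : Set M, MCodedSubset a X → X ∈ sets ∨ {x : M | x < a ∧ x ∉ X} ∈ sets

section Principles

variable (M : Type) [lang.Structure M]

/-- `F` is (the graph of) a Σ_m-definable injection from `[0, y)` into `[0, x)`. -/
def SigmaInjRel (m : ℕ) (F : M → M → Prop) (y x : M) : Prop :=
  SigmaDef2 m M F ∧
    (∀ u, u < y → ∃ v, v < x ∧ F u v) ∧
    (∀ u v v', u < y → F u v → F u v' → v = v') ∧
    (∀ u u' v, u < y → u' < y → F u v → F u' v → u = u')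

/-- There exists a Σ_m-definable injection from `[0, y)` into `[0, x)`. -/
def ExSigmaInj (m : ℕ) (y x : M) : Prop := ∃ F : M → M → Prop, SigmaInjRel M m F y x

/-- There exists a Σ_m-definable injection from all of `M` into `[0, a)`. -/
def SigmaInjWhole (m : ℕ) (a : M) : Prop :=
  ∃ F : M → M → Prop, SigmaDef2 m M F ∧
    (∀ u, ∃ v, v < a ∧ F u v) ∧
    (∀ u v v', F u v → F u v' → v = v') ∧
    (∀ u u' v, F u v → F u' v → u = u')

/-- CARD(Σ_m): no Σ_m-definable multivalued map sends `M` injectively below `a`. -/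
def CARD (m : ℕ) : Prop :=
  ∀ F : M → M → Prop, SigmaDef2 m M F → ∀ a : M,
    (∀ x, ∃ y, y < a ∧ F x y) →
      ∃ x0 x1 y, x0 ≠ x1 ∧ y < a ∧ F x0 y ∧ F x1 y

/-- GPHP(Σ_m): for every `x` there is `y` with no Σ_m-definable injection of
`[0,y)` into `[0,x)`. -/
def GPHP (m : ℕ) : Prop := ∀ x : M, ∃ y : M, ¬ExSigmaInj M m y x

/-- WPHP(Σ_m): for `x > 0` there is no Σ_m-definable injection of `[0,2x)` into `[0,x)`. -/
def WPHP (m : ℕ) : Prop := ∀ x : M, 0 < x → ¬ExSigmaInj M m (x + x) x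

/-- `C` is a Σ_m-definable `k`-coloring of `[y]^e` (acting on codes of
`e`-element subsets of `[0,y)`, independently of the chosen code). -/
def IsColoring (m : ℕ) (e y k : M) (C : M → M → Prop) : Prop :=
  SigmaDef2 m M C ∧
    (∀ d D, CodesTupleIn d e y D → ∃ i, i < k ∧ C d i) ∧
    (∀ d d' D i i', CodesTupleIn d e y D → CodesTupleIn d' e y D → C d i → C d' i' → i = i')

/-- FRT^e_k(Σ_m): every Σ_m-definable `k`-coloring of some `[y]^e` has an
M-finite homogeneous set of cardinality `x`, for every `x`. -/
def FRT (m : ℕ) (e k : M) : Prop :=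
  ∀ x : M, ∃ y : M, ∀ C : M → M → Prop, IsColoring M m e y k C →
    ∃ (c : M) (H : Set M), CodesFinset c H x ∧ (∀ z ∈ H, z < y) ∧
      ∃ i, ∀ d D, CodesFinset d D e → D ⊆ H → C d i

/-- fairFRT^e_k(Σ_m): the homogeneous set is required to be given as the range of a
Σ_m-definable injection from `[0,x)` into `[0,y)`. -/
def FairFRT (m : ℕ) (e k : M) : Prop :=
  ∀ x : M, ∃ y : M, ∀ C : M → M → Prop, IsColoring M m e y k C →
    ∃ H : M → M → Prop, SigmaInjRel M m H x y ∧
      ∃ i, ∀ d D, CodesFinset d D e → (∀ z ∈ D, ∃ u, u < x ∧ H u z) → C d i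

/-- `C` is a Σ_m-definable `k`-coloring of `[0, y)`. -/
def IsColoring1 (m : ℕ) (y k : M) (C : M → M → Prop) : Prop :=
  SigmaDef2 m M C ∧
    (∀ z, z < y → ∃ i, i < k ∧ C z i) ∧
    (∀ z i i', z < y → C z i → C z i' → i = i')

/-- FRT¹_k(Σ_m): every Σ_m-definable `k`-coloring of some `[0,y)` has an M-finite
homogeneous set of cardinality `x`, for every `x`. -/
def FRT1 (m : ℕ) (k : M) : Prop :=
  ∀ x : M, ∃ y : M, ∀ C : M → M → Prop, IsColoring1 M m y k C →
    ∃ (c : M) (H : Set M), CodesFinset c H x ∧ (∀ z ∈ H, z < y) ∧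
      ∃ i, ∀ z ∈ H, C z i

/-- fairFRT¹_k(Σ_m). -/
def FairFRT1 (m : ℕ) (k : M) : Prop :=
  ∀ x : M, ∃ y : M, ∀ C : M → M → Prop, IsColoring1 M m y k C →
    ∃ H : M → M → Prop, SigmaInjRel M m H x y ∧
      ∃ i, ∀ u v, u < x → H u v → C v i

end Principles

section Approx

variable {M : Type} [lang.Structure M]

/-- `f` is (the graph of) a partial function. -/
def IsPartialFun (f : M → M → Prop) : Prop := ∀ x y y', f x y → f x y' → y = y'

/-- `s` codes an approximation to the partial function `f` of length `b`. -/
def IsApprox (f : M → M → Prop) (s b : M) : Prop :=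
  (∀ i, i < b → ∃ v, SeqAt s i v) ∧
    (∀ i u v x y, i + 1 < b → SeqAt s i u → SeqAt s (i + 1) v → x ≤ u → f x y → y ≤ v)

/-- `s` codes a `g`-stretched approximation to the partial function `f` of length `b`. -/
def IsStretchedApprox (f g : M → M → Prop) (s b : M) : Prop :=
  (∀ i, i < b → ∃ v, SeqAt s i v) ∧
    (∀ i u w v x y, i + 1 < b → SeqAt s i u → g u w → SeqAt s (i + 1) v →
      x ≤ w → f x y → y ≤ v)

/-- The eventual (limit) value of `fun s => h s ·` is `x`. -/
def EvLim (h : M → M → Prop) (x : M) : Prop := ∃ s : M, ∀ t, s < t → h t x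

end Approx

/-- PΣ_m: every partial Σ_m-definable function admits approximations of every length. -/
def PSig (m : ℕ) (M : Type) [lang.Structure M] : Prop :=
  ∀ f : M → M → Prop, SigmaDef2 m M f → IsPartialFun f → ∀ b : M, ∃ s, IsApprox f s b

section Extensions

variable (M N : Type) [lang.Structure M] [lang.Structure N]

/-- `g : M → N` is Σ_m-elementary: Σ_m formulas with parameters from `M` transfer. -/
def SigmaElem (m : ℕ) (g : M → N) : Prop :=
  ∀ (p : ℕ) (φ : lang.BoundedFormula (Fin p) 0), SigmaFm m 0 φ →
    ∀ v : Fin p → M, (φ.Realize v finZeroElim ↔ φ.Realize (g ∘ v) finZeroElim)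

/-- The extension `g : M → N` is cofinal. -/
def Cofinal (g : M → N) : Prop := ∀ z : N, ∃ x : M, z ≤ g x

/-- `[0,a]^M = [0,a]^N`: every element of `N` below `g a` comes from `M`. -/
def SameBelow (g : M → N) (a : M) : Prop := ∀ z : N, z ≤ g a → ∃ x : M, g x = z

end Extensions

section Ramsey

variable {M : Type} [lang.Structure M]

/-- `f` is an M-coded `k`-coloring of `[y]^e` (assigning colors to codes of
`e`-subsets of `[0,y)`, independently of the code). -/
def CodedColoring (f e y k : M) : Prop :=
  (∀ d D, CodesTupleIn d e y D → ∃ i, i < k ∧ SeqAt f d i) ∧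
    (∀ d d' D i i', CodesTupleIn d e y D → CodesTupleIn d' e y D →
      SeqAt f d i → SeqAt f d' i' → i = i')

/-- The coded coloring `f` of `[y]^e` has an M-coded homogeneous set of cardinality `x`. -/
def CodedHomog (f e y x : M) : Prop :=
  ∃ (c : M) (H : Set M), CodesFinset c H x ∧ (∀ z ∈ H, z < y) ∧
    ∃ i, ∀ d D, CodesFinset d D e → D ⊆ H → SeqAt f d i

/-- `y = r(x, e, k)`: `y` is the least size guaranteeing coded homogeneous sets of
cardinality `x` for all coded `k`-colorings of `e`-subsets. -/
def IsRamsey (x e k y : M) : Prop :=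
  (∀ f, CodedColoring f e y k → CodedHomog f e y x) ∧
    (∀ y', y' < y → ∃ f, CodedColoring f e y' k ∧ ¬CodedHomog f e y' x)

/-- `y = r^(b)(x, e, k)`: the `b`-th iterate of the Ramsey function inside `M`. -/
def IterRamsey (x e k b y : M) : Prop :=
  ∃ s : M, SeqAt s 0 x ∧ SeqAt s b y ∧ (∀ i, i ≤ b → ∃ u, SeqAt s i u) ∧
    (∀ i u v, i < b → SeqAt s i u → SeqAt s (i + 1) v → IsRamsey u e k v)

end Ramsey

end ArithFC

namespace ArithFC

/-
The model is the union of a chain of restricted ultrapowers `M_0 ⊆ M_1 ⊆ …` of the standard model: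
for a fixed nonprincipal ultrafilter on `ℕ`, `M_k` consists of the classes of the sequences
`g ∘ q_k` with `g` a `Δ_{n+1}` function, where `q_0` is the identity and
`q_{k+1} = ⟨q_k, P_k ∘ q_k⟩`. The functions `P_k` are generic for `Δ_{n+1}` functions: by a
pigeonhole fusion argument, `M_{k+1}` is a proper extension of `M_k` with no new elements below a
bound `h_k`, and the bounds are cofinal.

`Σ_n` formulas obey Łoś's theorem in the union, whence `PA⁻` and `IΣ_n`. For `CARD(Σ_{n+1})`, choose
`k` so large that `M_k` contains all elements below `a` and the parameters of `F`. If `x ∉ M_k` and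
`F(x, y)` with `y < a`, then `F(x', y)` reflects to some `x' ∈ M_k`, and `x' ≠ x`.

Let now `a` be the class of the identity and `b` arbitrary. Choose `k` such that `M_k` contains
every element below `b`. Each `u < b` is then the value at `q_k` of a `Δ_{n+1}` function with a
standard index, and standard indices are below `a`. The least pair of a witness and an index `i < a`
for which the partial `Σ_{n+1}` function of index `i` takes the value `u` at `q_k` is a `Σ_{n+1}`
function of `u`, and sending `u` to this `i` is injective.
-/

section Hierarchy

variable {α β γ δ : Type} [Primcodable α] [Primcodable β] [Primcodable γ] [Primcodable δ]
  {k l n : ℕ}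

/-- The arithmetical hierarchy of the standard model, on an arbitrary coded type: `SigmaPred k p`
says that `p` is `Σ_k`. A `Π_k` matrix is written as the negation of a `Σ_k` one, and level `0` is
the class of primitive recursive predicates. -/
def SigmaPred : ℕ → ∀ {α : Type} [Primcodable α], (α → Prop) → Prop
  | 0, _, _, p => PrimrecPred p
  | k + 1, α, _, p => ∃ r : α × ℕ → Prop, SigmaPred k r ∧ ∀ x, p x ↔ ∃ y, ¬ r (x, y)

theorem primrec_unpair_fst : Primrec fun z : ℕ => z.unpair.1 := Primrec.fst.comp Primrec.unpair

theorem primrec_unpair_snd : Primrec fun z : ℕ => z.unpair.2 := Primrec.snd.comp Primrec.unpair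

theorem primrec_assoc_unpair :
    Primrec fun z : α × ℕ => ((z.1, z.2.unpair.1), z.2.unpair.2) :=
  (Primrec.fst.pair (primrec_unpair_fst.comp Primrec.snd)).pair
    (primrec_unpair_snd.comp Primrec.snd)

theorem primrec_fst_fst_pair_snd : Primrec fun z : (α × β) × γ => (z.1.1, z.2) :=
  (Primrec.fst.comp Primrec.fst).pair Primrec.snd

theorem primrec_pow : Primrec₂ fun a b : ℕ => a ^ b :=
  ((Primrec.nat_rec (Primrec.const 1) (Primrec.nat_mul.comp
    (Primrec.snd.comp Primrec.snd) Primrec.fst).to₂).of_eq fun a b => by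
      induction b with
      | zero => rfl
      | succ b ih => exact congrArg (· * a) ih : Primrec₂ fun a b : ℕ => a ^ b)

namespace SigmaPred

theorem of_eq {p q : α → Prop} (hp : SigmaPred k p) (H : ∀ x, p x ↔ q x) : SigmaPred k q :=
  (funext fun x => propext (H x) : p = q) ▸ hp

theorem comp {p : β → Prop} {f : α → β} (hp : SigmaPred k p) (hf : Primrec f) :
    SigmaPred k fun x => p (f x) := by
  induction k generalizing α β with
  | zero => exact PrimrecPred.comp hp hf
  | succ k ih =>
    obtain ⟨r, hr, h⟩ := hp
    exact ⟨fun z => r (f z.1, z.2), ih hr ((hf.comp Primrec.fst).pair Primrec.snd), fun x => h _⟩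

theorem of_not {p : α → Prop} (hp : SigmaPred k fun x => ¬ p x) : SigmaPred (k + 1) p :=
  ⟨fun z => ¬ p z.1, hp.comp Primrec.fst, fun x => by simp⟩

theorem not {p : α → Prop} (hp : SigmaPred k p) : SigmaPred (k + 1) fun x => ¬ p x :=
  of_not (hp.of_eq fun _ => not_not.symm)

theorem succ {p : α → Prop} (hp : SigmaPred k p) : SigmaPred (k + 1) p := by
  induction k generalizing α with
  | zero => exact of_not (PrimrecPred.not hp)
  | succ k ih =>
    obtain ⟨r, hr, h⟩ := hp
    exact ⟨r, ih hr, h⟩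

theorem mono {p : α → Prop} (hp : SigmaPred k p) (h : k ≤ l) : SigmaPred l p := by
  induction h with
  | refl => exact hp
  | step _ ih => exact ih.succ

theorem of_primrecPred {p : α → Prop} (hp : PrimrecPred p) : SigmaPred k p :=
  mono (k := 0) hp k.zero_le

theorem and_or {p q : α → Prop} (hp : SigmaPred k p) (hq : SigmaPred k q) :
    SigmaPred k (fun x => p x ∧ q x) ∧ SigmaPred k (fun x => p x ∨ q x) := by
  induction k generalizing α with
  | zero => exact ⟨PrimrecPred.and hp hq, PrimrecPred.or hp hq⟩
  | succ k ih =>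
    obtain ⟨r, hr, hpr⟩ := hp
    obtain ⟨s, hs, hqs⟩ := hq
    refine ⟨⟨fun z => r (z.1, z.2.unpair.1) ∨ s (z.1, z.2.unpair.2), (ih
      (hr.comp (Primrec.fst.pair (primrec_unpair_fst.comp Primrec.snd)))
      (hs.comp (Primrec.fst.pair (primrec_unpair_snd.comp Primrec.snd)))).2, fun x => ?_⟩,
      ⟨fun z => r z ∧ s z, (ih hr hs).1, fun x => ?_⟩⟩
    · simp only [hpr, hqs, not_or]
      exact ⟨fun ⟨⟨y, hy⟩, ⟨z, hz⟩⟩ => ⟨Nat.pair y z, by simp [hy, hz]⟩,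
        fun ⟨y, hy⟩ => ⟨⟨_, hy.1⟩, ⟨_, hy.2⟩⟩⟩
    · simp only [hpr, hqs, ← exists_or, not_and_or]

theorem and {p q : α → Prop} (hp : SigmaPred k p) (hq : SigmaPred k q) :
    SigmaPred k fun x => p x ∧ q x := (hp.and_or hq).1

theorem or {p q : α → Prop} (hp : SigmaPred k p) (hq : SigmaPred k q) :
    SigmaPred k fun x => p x ∨ q x := (hp.and_or hq).2

theorem exists_nat {p : α × ℕ → Prop} (hp : SigmaPred (k + 1) p) :
    SigmaPred (k + 1) fun x => ∃ y, p (x, y) := by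
  obtain ⟨r, hr, h⟩ := hp
  refine ⟨_, hr.comp primrec_assoc_unpair, fun x => ?_⟩
  simp only [h]
  exact ⟨fun ⟨y, z, hz⟩ => ⟨Nat.pair y z, by simpa using hz⟩, fun ⟨y, hy⟩ => ⟨_, _, hy⟩⟩

theorem exists_coded [Inhabited β] {p : α × β → Prop} (hp : SigmaPred (k + 1) p) :
    SigmaPred (k + 1) fun x => ∃ y, p (x, y) := by
  have hdecode : Primrec fun z : α × ℕ => (z.1, (Encodable.decode z.2 : Option β).getD default) :=
    Primrec.fst.pair (Primrec.option_getD_default.comp (Primrec.decode.comp Primrec.snd))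
  exact (hp.comp hdecode).exists_nat.of_eq fun x =>
    ⟨fun ⟨y, hy⟩ => ⟨_, hy⟩, fun ⟨y, hy⟩ => ⟨Encodable.encode y, by simpa using hy⟩⟩

theorem exists_lt {p : α × ℕ → Prop} {b : α → ℕ} (hp : SigmaPred k p) (hb : Primrec b) :
    SigmaPred k fun x => ∃ y < b x, p (x, y) := by
  cases k with
  | zero =>
    have h : PrimrecRel fun (y : ℕ) (x : α) => p (x, y) :=
      PrimrecPred.comp hp (Primrec.snd.pair Primrec.fst)
    exact PrimrecPred.of_eq (h.exists_mem_list.comp (Primrec.list_range.comp hb) Primrec.id)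
      fun x => by simp
  | succ k =>
    exact ((of_primrecPred (Primrec.nat_lt.comp Primrec.snd (hb.comp Primrec.fst))).and
      hp).exists_nat

theorem forall_lt {p : α × ℕ → Prop} {b : α → ℕ} (hp : SigmaPred k p) (hb : Primrec b) :
    SigmaPred k fun x => ∀ y < b x, p (x, y) := by
  cases k with
  | zero =>
    have h : PrimrecRel fun (y : ℕ) (x : α) => p (x, y) :=
      PrimrecPred.comp hp (Primrec.snd.pair Primrec.fst)
    exact PrimrecPred.of_eq (h.forall_mem_list.comp (Primrec.list_range.comp hb) Primrec.id)
      fun x => by simp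
  | succ k =>
    obtain ⟨r, hr, h⟩ := hp
    have hmatrix : SigmaPred k fun z : (α × List ℕ) × ℕ => r ((z.1.1, z.2), z.1.2.getD z.2 0) :=
      hr.comp (primrec_fst_fst_pair_snd.pair
        ((Primrec.list_getD 0).comp (Primrec.snd.comp Primrec.fst) Primrec.snd))
    refine (hmatrix.exists_lt (hb.comp Primrec.fst)).not.exists_coded.of_eq fun x => ?_
    simp only [h, not_exists, not_and]
    refine ⟨fun ⟨l, hl⟩ y hy => ⟨_, hl y hy⟩, fun H => ?_⟩
    choose! w hw using H
    refine ⟨(List.range (b x)).map w, fun y hy => ?_⟩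
    simpa [List.getD_eq_getElem?_getD, hy] using hw y hy

end SigmaPred

/-- The `Δ_k` predicates of the standard model. -/
def DeltaPred (k : ℕ) (p : α → Prop) : Prop := SigmaPred k p ∧ SigmaPred k fun x => ¬ p x

/-- The total functions with `Σ_k` graph; for `k > 0` these are the `Δ_k` functions. -/
def DeltaFun (k : ℕ) (f : α → β) : Prop := SigmaPred k fun z : α × β => f z.1 = z.2

theorem SigmaPred.comp_deltaFun [Inhabited β] {p : β → Prop} {f : α → β}
    (hp : SigmaPred (n + 1) p) (hf : DeltaFun (n + 1) f) : SigmaPred (n + 1) fun x => p (f x) :=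
  (SigmaPred.exists_coded (SigmaPred.and hf (hp.comp Primrec.snd))).of_eq fun x => by simp

theorem sigmaPred_nodup (k : ℕ) : SigmaPred (k + 1) fun l : List ℕ => l.Nodup := by
  have hget : Primrec₂ fun (l : List ℕ) i => l.getD i 0 := Primrec.list_getD 0
  have h : SigmaPred (k + 1) fun l : List ℕ =>
      ∀ j < l.length, ∀ i < j, l.getD i 0 ≠ l.getD j 0 :=
    SigmaPred.forall_lt
      (p := fun z : List ℕ × ℕ => ∀ i < z.2, z.1.getD i 0 ≠ z.1.getD z.2 0)
      (SigmaPred.forall_lt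
        (p := fun z : (List ℕ × ℕ) × ℕ => z.1.1.getD z.2 0 ≠ z.1.1.getD z.1.2 0)
        (SigmaPred.of_primrecPred (PrimrecPred.not (Primrec.eq.comp
          (hget.comp (Primrec.fst.comp Primrec.fst) Primrec.snd)
          (hget.comp (Primrec.fst.comp Primrec.fst) (Primrec.snd.comp Primrec.fst)))))
        Primrec.snd)
      Primrec.list_length
  refine h.of_eq fun l => Iff.trans ⟨fun H i j hi hj hij => ?_, fun H j hj i hij => ?_⟩
    List.pairwise_iff_getElem.symm
  · simpa only [List.getD_eq_getElem _ _ hi, List.getD_eq_getElem _ _ hj] using H j hj i hij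
  · simpa only [List.getD_eq_getElem _ _ (hij.trans hj), List.getD_eq_getElem _ _ hj]
      using H i j (hij.trans hj) hj hij

theorem SigmaPred.exists_finset {p : α × ℕ → Prop} {N : α → ℕ} (hp : SigmaPred (k + 1) p)
    (hN : DeltaFun (k + 1) N) :
    SigmaPred (k + 1) fun x => ∃ S : Finset ℕ, N x = S.card ∧ ∀ y ∈ S, p (x, y) := by
  have hmem : SigmaPred (k + 1) fun z : α × List ℕ =>
      ∀ i < z.2.length, p (z.1, z.2.getD i 0) :=
    SigmaPred.forall_lt (p := fun z : (α × List ℕ) × ℕ => p (z.1.1, z.1.2.getD z.2 0))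
      (hp.comp ((Primrec.fst.comp Primrec.fst).pair
        ((Primrec.list_getD 0).comp (Primrec.snd.comp Primrec.fst) Primrec.snd)))
      (Primrec.list_length.comp Primrec.snd)
  have hlength : SigmaPred (k + 1) fun z : α × List ℕ => N z.1 = z.2.length :=
    SigmaPred.comp hN (Primrec.fst.pair (Primrec.list_length.comp Primrec.snd))
  have hnodup : SigmaPred (k + 1) fun z : α × List ℕ => z.2.Nodup :=
    (sigmaPred_nodup k).comp Primrec.snd
  refine (hlength.and (hnodup.and hmem)).exists_coded.of_eq fun x => ⟨?_, ?_⟩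
  · rintro ⟨l, hl, hnd, hlp⟩
    refine ⟨l.toFinset, hl.trans (List.toFinset_card_of_nodup hnd).symm, fun y hy => ?_⟩
    obtain ⟨i, hi, rfl⟩ := List.mem_iff_getElem.1 (List.mem_toFinset.1 hy)
    simpa only [List.getD_eq_getElem _ _ hi] using hlp i hi
  · rintro ⟨S, hS, hSp⟩
    refine ⟨S.toList, by simpa only [Finset.length_toList] using hS, S.nodup_toList,
      fun i hi => ?_⟩
    rw [List.getD_eq_getElem _ _ hi]
    exact hSp _ (Finset.mem_toList.1 (List.getElem_mem hi))

namespace DeltaFun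

theorem of_primrec {f : α → β} (hf : Primrec f) : DeltaFun k f :=
  SigmaPred.of_primrecPred (Primrec.eq.comp (hf.comp Primrec.fst) Primrec.snd)

theorem comp [Inhabited β] {g : β → γ} {f : α → β} (hg : DeltaFun (n + 1) g)
    (hf : DeltaFun (n + 1) f) : DeltaFun (n + 1) fun x => g (f x) := by
  have hfst : SigmaPred (n + 1) fun z : (α × γ) × β => f z.1.1 = z.2 :=
    SigmaPred.comp hf primrec_fst_fst_pair_snd
  have hsnd : SigmaPred (n + 1) fun z : (α × γ) × β => g z.2 = z.1.2 :=
    SigmaPred.comp hg (Primrec.snd.pair (Primrec.snd.comp Primrec.fst))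
  exact (hfst.and hsnd).exists_coded.of_eq fun x => by simp

theorem pair {f : α → β} {g : α → γ} (hf : DeltaFun k f) (hg : DeltaFun k g) :
    DeltaFun k fun x => (f x, g x) := by
  have hfst : SigmaPred k fun z : α × (β × γ) => f z.1 = z.2.1 :=
    SigmaPred.comp hf (Primrec.fst.pair (Primrec.fst.comp Primrec.snd))
  have hsnd : SigmaPred k fun z : α × (β × γ) => g z.1 = z.2.2 :=
    SigmaPred.comp hg (Primrec.fst.pair (Primrec.snd.comp Primrec.snd))
  exact (hfst.and hsnd).of_eq fun x => by simp [Prod.ext_iff]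

theorem id : DeltaFun k fun x : α => x := of_primrec Primrec.id

theorem fst : DeltaFun k fun x : α × β => x.1 := of_primrec Primrec.fst

theorem snd : DeltaFun k fun x : α × β => x.2 := of_primrec Primrec.snd

theorem const (b : β) : DeltaFun k fun _ : α => b := of_primrec (Primrec.const b)

theorem primrec_comp [Inhabited β] {F : β → γ} (hF : Primrec F) {f : α → β}
    (hf : DeltaFun (n + 1) f) : DeltaFun (n + 1) fun x => F (f x) :=
  (of_primrec hF).comp hf

theorem primrec_comp₂ [Inhabited β] [Inhabited γ] {F : β → γ → δ} (hF : Primrec₂ F) {f : α → β}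
    {g : α → γ} (hf : DeltaFun (n + 1) f) (hg : DeltaFun (n + 1) g) :
    DeltaFun (n + 1) fun x => F (f x) (g x) :=
  (of_primrec hF).comp (hf.pair hg)

variable {f g : α → ℕ}

theorem add (hf : DeltaFun (n + 1) f) (hg : DeltaFun (n + 1) g) :
    DeltaFun (n + 1) fun x => f x + g x := primrec_comp₂ Primrec.nat_add hf hg

theorem mul (hf : DeltaFun (n + 1) f) (hg : DeltaFun (n + 1) g) :
    DeltaFun (n + 1) fun x => f x * g x := primrec_comp₂ Primrec.nat_mul hf hg

theorem sub (hf : DeltaFun (n + 1) f) (hg : DeltaFun (n + 1) g) :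
    DeltaFun (n + 1) fun x => f x - g x := primrec_comp₂ Primrec.nat_sub hf hg

theorem min (hf : DeltaFun (n + 1) f) (hg : DeltaFun (n + 1) g) :
    DeltaFun (n + 1) fun x => min (f x) (g x) := primrec_comp₂ Primrec.nat_min hf hg

theorem pow (hf : DeltaFun (n + 1) f) (hg : DeltaFun (n + 1) g) :
    DeltaFun (n + 1) fun x => f x ^ g x := primrec_comp₂ primrec_pow hf hg

theorem natPair (hf : DeltaFun (n + 1) f) (hg : DeltaFun (n + 1) g) :
    DeltaFun (n + 1) fun x => Nat.pair (f x) (g x) := primrec_comp₂ Primrec₂.natPair hf hg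

theorem unpair_fst (hf : DeltaFun (n + 1) f) : DeltaFun (n + 1) fun x => (f x).unpair.1 :=
  primrec_comp primrec_unpair_fst hf

theorem unpair_snd (hf : DeltaFun (n + 1) f) : DeltaFun (n + 1) fun x => (f x).unpair.2 :=
  primrec_comp primrec_unpair_snd hf

end DeltaFun

namespace DeltaPred

variable {p q : α → Prop}

theorem of_eq (hp : DeltaPred k p) (H : ∀ x, p x ↔ q x) : DeltaPred k q :=
  (funext fun x => propext (H x) : p = q) ▸ hp

theorem of_primrecPred (hp : PrimrecPred p) : DeltaPred k p :=
  ⟨SigmaPred.of_primrecPred hp, SigmaPred.of_primrecPred hp.not⟩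

theorem of_sigmaPred (hp : SigmaPred n p) : DeltaPred (n + 1) p := ⟨hp.succ, hp.not⟩

theorem not (hp : DeltaPred k p) : DeltaPred k fun x => ¬ p x :=
  ⟨hp.2, hp.1.of_eq fun _ => not_not.symm⟩

theorem of_not (hp : DeltaPred k fun x => ¬ p x) : DeltaPred k p :=
  hp.not.of_eq fun _ => not_not

theorem and (hp : DeltaPred k p) (hq : DeltaPred k q) : DeltaPred k fun x => p x ∧ q x :=
  ⟨hp.1.and hq.1, (hp.2.or hq.2).of_eq fun _ => not_and_or.symm⟩

theorem or (hp : DeltaPred k p) (hq : DeltaPred k q) : DeltaPred k fun x => p x ∨ q x :=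
  ⟨hp.1.or hq.1, (hp.2.and hq.2).of_eq fun _ => not_or.symm⟩

theorem imp (hp : DeltaPred k p) (hq : DeltaPred k q) : DeltaPred k fun x => p x → q x :=
  (hp.not.or hq).of_eq fun _ => imp_iff_not_or.symm

theorem const (P : Prop) : DeltaPred k fun _ : α => P :=
  of_primrecPred (by classical exact Primrec.primrecPred (Primrec.const (decide P)))

theorem comp [Inhabited β] {p : β → Prop} {f : α → β} (hp : DeltaPred (n + 1) p)
    (hf : DeltaFun (n + 1) f) : DeltaPred (n + 1) fun x => p (f x) :=
  ⟨hp.1.comp_deltaFun hf, hp.2.comp_deltaFun hf⟩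

theorem primrecRel_comp [Inhabited β] [Inhabited γ] {R : β → γ → Prop} (hR : PrimrecRel R)
    {f : α → β} {g : α → γ} (hf : DeltaFun (n + 1) f) (hg : DeltaFun (n + 1) g) :
    DeltaPred (n + 1) fun x => R (f x) (g x) :=
  (of_primrecPred hR).comp (hf.pair hg)

variable {f g : α → ℕ}

theorem eq (hf : DeltaFun (n + 1) f) (hg : DeltaFun (n + 1) g) :
    DeltaPred (n + 1) fun x => f x = g x := primrecRel_comp Primrec.eq hf hg

theorem lt (hf : DeltaFun (n + 1) f) (hg : DeltaFun (n + 1) g) :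
    DeltaPred (n + 1) fun x => f x < g x := primrecRel_comp Primrec.nat_lt hf hg

theorem le (hf : DeltaFun (n + 1) f) (hg : DeltaFun (n + 1) g) :
    DeltaPred (n + 1) fun x => f x ≤ g x := primrecRel_comp Primrec.nat_le hf hg

theorem forall_lt_snd {p : α × ℕ → Prop} (hp : DeltaPred k p) :
    DeltaPred k fun z : α × ℕ => ∀ y < z.2, p (z.1, y) :=
  ⟨(hp.1.comp primrec_fst_fst_pair_snd).forall_lt Primrec.snd,
    ((hp.2.comp primrec_fst_fst_pair_snd).exists_lt Primrec.snd).of_eq fun z => by simp⟩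

theorem forall_lt [Inhabited α] {p : α × ℕ → Prop} {b : α → ℕ} (hp : DeltaPred (n + 1) p)
    (hb : DeltaFun (n + 1) b) : DeltaPred (n + 1) fun x => ∀ y < b x, p (x, y) :=
  hp.forall_lt_snd.comp (DeltaFun.id.pair hb)

theorem forall_finite {ι : Type} [Finite ι] {p : ι → α → Prop} (hp : ∀ i, DeltaPred k (p i)) :
    DeltaPred k fun x => ∀ i, p i x := by
  obtain ⟨m, ⟨e⟩⟩ := Finite.exists_equiv_fin ι
  suffices h : ∀ m (q : Fin m → α → Prop), (∀ i, DeltaPred k (q i)) →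
      DeltaPred k fun x => ∀ i, q i x from
    (h m (fun j => p (e.symm j)) fun j => hp _).of_eq fun x =>
      e.symm.forall_congr_right (q := (p · x))
  intro m q hq
  induction m with
  | zero => exact (const True).of_eq fun x => by simp
  | succ m ih =>
    exact ((hq 0).and (ih _ fun i => hq i.succ)).of_eq fun x => by rw [Fin.forall_fin_succ]

theorem isLeast {ρ : α × ℕ → Prop} (hρ : DeltaPred k ρ) :
    DeltaPred k fun z : α × ℕ => IsLeast {y | ρ (z.1, y)} z.2 :=
  (hρ.and hρ.not.forall_lt_snd).of_eq fun z =>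
    and_congr_right fun _ => forall_congr' fun _ => imp_not_comm.trans (by rw [not_lt]; rfl)

theorem exists_isLeast {ρ : α × ℕ → Prop} (hρ : DeltaPred k ρ) (h : ∀ x, ∃ y, ρ (x, y)) :
    ∃ f : α → ℕ, DeltaFun k f ∧ ∀ x, IsLeast {y | ρ (x, y)} (f x) := by
  classical
  have hleast : ∀ x, IsLeast {y | ρ (x, y)} (Nat.find (h x)) := fun x => Nat.isLeast_find (h x)
  exact ⟨fun x => Nat.find (h x),
    hρ.isLeast.1.of_eq fun z => ⟨(hleast z.1).unique, fun hz => hz ▸ hleast z.1⟩, hleast⟩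

end DeltaPred

theorem SigmaPred.uniformization {R : α × ℕ → Prop} (hR : SigmaPred (n + 1) R)
    (h : ∀ x, ∃ y, R (x, y)) : ∃ f : α → ℕ, DeltaFun (n + 1) f ∧ ∀ x, R (x, f x) := by
  obtain ⟨r, hr, hRr⟩ := hR
  obtain ⟨f, hf, hfr⟩ := (DeltaPred.of_sigmaPred (hr.comp primrec_assoc_unpair)).not.exists_isLeast
    fun x => by
      obtain ⟨y, hy⟩ := h x
      obtain ⟨z, hz⟩ := (hRr _).1 hy
      exact ⟨Nat.pair y z, by simpa using hz⟩
  exact ⟨fun x => (f x).unpair.1, hf.unpair_fst, fun x => (hRr _).2 ⟨_, (hfr x).1⟩⟩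

theorem DeltaPred.exists_skolem {ρ : α × ℕ → Prop} (hρ : DeltaPred (n + 1) ρ)
    (h : DeltaPred (n + 1) fun x => ∃ y, ρ (x, y)) :
    ∃ f : α → ℕ, DeltaFun (n + 1) f ∧ ∀ x, (∃ y, ρ (x, y)) → ρ (x, f x) := by
  have himp : SigmaPred (n + 1) fun z : α × ℕ => (∃ y, ρ (z.1, y)) → ρ z :=
    ((h.2.comp Primrec.fst).or hρ.1).of_eq fun _ => imp_iff_not_or.symm
  exact himp.uniformization fun x => by
    by_cases H : ∃ y, ρ (x, y)
    · exact ⟨H.choose, fun _ => H.choose_spec⟩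
    · exact ⟨0, fun H' => (H H').elim⟩

end Hierarchy

section UniversalPredicate

open Nat.Partrec (Code)

/-- The standard universal `Σ_k` predicate for `k > 0`; at the bottom, `UnivPred 0 e ⟨x, s⟩` says
that the program `e` does not halt on `x` within `s` steps. -/
def UnivPred : ℕ → ℕ → ℕ → Prop
  | 0, e, z => ¬ (Code.evaln z.unpair.2 (Denumerable.ofNat Code e) z.unpair.1).isSome
  | k + 1, e, x => ∃ y, ¬ UnivPred k e (Nat.pair x y)

theorem sigmaPred_univPred (k : ℕ) : SigmaPred k fun z : ℕ × ℕ => UnivPred k z.1 z.2 := by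
  induction k with
  | zero =>
    have h : Primrec fun z : ℕ × ℕ =>
        (Code.evaln z.2.unpair.2 (Denumerable.ofNat Code z.1) z.2.unpair.1).isSome :=
      Primrec.option_isSome.comp (Code.primrec_evaln.comp
        (((primrec_unpair_snd.comp Primrec.snd).pair ((Primrec.ofNat Code).comp Primrec.fst)).pair
          (primrec_unpair_fst.comp Primrec.snd)))
    exact PrimrecPred.not (Primrec.eq.comp h (Primrec.const true))
  | succ k ih =>
    exact ⟨fun z => UnivPred k z.1.1 (Nat.pair z.1.2 z.2), ih.comp
      ((Primrec.fst.comp Primrec.fst).pair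
        (Primrec₂.natPair.comp (Primrec.snd.comp Primrec.fst) Primrec.snd)), fun x => Iff.rfl⟩

theorem SigmaPred.exists_partrec {p : ℕ → Prop} (hp : SigmaPred 1 p) :
    ∃ f : ℕ →. ℕ, Nat.Partrec f ∧ ∀ x, p x ↔ ∃ y, y ∈ f x := by
  classical
  obtain ⟨r, hr, h⟩ := hp
  have hr' : PrimrecPred fun z => ¬ r z := PrimrecPred.not hr
  refine ⟨fun x => Nat.rfind fun y => Part.some (decide ¬ r (x, y)),
    Partrec.nat_iff.1 (Partrec.rfind hr'.decide.to_comp), fun x => ?_⟩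
  rw [h, ← Part.dom_iff_mem]
  exact ⟨fun ⟨y, hy⟩ => ⟨y, by simp [hy], fun _ _ => trivial⟩,
    fun ⟨y, hy, _⟩ => ⟨y, by simpa using hy⟩⟩

theorem SigmaPred.exists_index {k : ℕ} {p : ℕ → Prop} (hp : SigmaPred (k + 1) p) :
    ∃ e, ∀ x, p x ↔ UnivPred (k + 1) e x := by
  induction k generalizing p with
  | zero =>
    obtain ⟨f, hf, h⟩ := hp.exists_partrec
    obtain ⟨c, rfl⟩ := Code.exists_code.1 hf
    refine ⟨Encodable.encode c, fun x => ?_⟩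
    simp only [h, UnivPred, Denumerable.ofNat_encode, Nat.unpair_pair, not_not,
      Code.evaln_complete, Option.isSome_iff_exists]
    exact exists_comm
  | succ k ih =>
    obtain ⟨r, hr, h⟩ := hp
    obtain ⟨e, he⟩ := ih (hr.comp Primrec.unpair)
    exact ⟨e, fun x => by rw [h, UnivPred]; simp only [← he, Nat.unpair_pair]⟩

theorem DeltaFun.exists_index {n : ℕ} {f : ℕ → ℕ} (hf : DeltaFun (n + 1) f) :
    ∃ e, ∀ x y, f x = y ↔ UnivPred (n + 1) e (Nat.pair x y) := by
  obtain ⟨e, he⟩ := (SigmaPred.comp hf Primrec.unpair).exists_index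
  exact ⟨e, fun x y => by simpa using he (Nat.pair x y)⟩

theorem exists_enumeration_deltaFun (n : ℕ) :
    ∃ F : ℕ → ℕ → ℕ, Set.range F = {f | DeltaFun (n + 1) f} := by
  choose e he using fun f : {f : ℕ → ℕ | DeltaFun (n + 1) f} => f.2.exists_index
  have he_inj : Function.Injective e := fun f g h =>
    Subtype.ext (funext fun x => ((he g x _).2 (h ▸ (he f x _).1 rfl)).symm)
  obtain ⟨F, hF⟩ := (Set.countable_coe_iff.1 he_inj.countable).exists_eq_range
    ⟨fun x => x, DeltaFun.id⟩
  exact ⟨F, hF.symm⟩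

end UniversalPredicate

section GenericTower

open Filter

variable {n : ℕ} {b f : ℕ → ℕ} {s : ℕ} {X : ℕ × ℕ → Prop}

/-- The largeness condition of the fusion construction of a generic function: at stage `s` every
late enough column of `X` still has `(b x + 3) ^ (x - s)` elements. A stage costs a factor
`b x + 3`, one more than the number of colours met when a function is truncated at `b x + 1`. -/
def IsLarge (b : ℕ → ℕ) (s : ℕ) (X : ℕ × ℕ → Prop) : Prop :=
  ∀ x ≥ s, ∃ S : Finset ℕ, (b x + 3) ^ (x - s) = S.card ∧ ∀ y ∈ S, X (x, y)

theorem exists_subset_min_eq {S : Finset ℕ} {B N : ℕ} (hN : 0 < N) (hS : N * (B + 3) ≤ S.card)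
    (a : ℕ) (φ : ℕ → ℕ) :
    ∃ v, ∃ T ⊆ S, N = T.card ∧ ∀ y ∈ T, y ≠ a ∧ min (φ y) (B + 1) = v := by
  have hcard : (Finset.range (B + 2)).card * N ≤ (S.erase a).card := by
    have := Finset.pred_card_le_card_erase (s := S) (a := a)
    rw [Finset.card_range]
    lia
  obtain ⟨v, -, hv⟩ := Finset.exists_le_card_fiber_of_mul_le_card_of_maps_to
    (f := fun y => min (φ y) (B + 1)) (fun y _ => by simp) (by simp) hcard
  obtain ⟨T, hTS, hT⟩ := Finset.exists_subset_card_eq hv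
  refine ⟨v, T, fun y hy => ?_, hT.symm, fun y hy => ?_⟩ <;>
  · have := hTS hy
    simp_all

theorem IsLarge.exists_thinning (hb : DeltaFun (n + 1) b) (hf : DeltaFun (n + 1) f)
    (hX : DeltaPred (n + 1) X) (hlarge : IsLarge b s X) :
    ∃ X', (DeltaPred (n + 1) X' ∧ IsLarge b (s + 1) X') ∧ X' ≤ X ∧ ∃ V, DeltaFun (n + 1) V ∧
      ∀ x y, X' (x, y) → y ≠ f x ∧ min (f (Nat.pair x y)) (b x + 1) = V x := by
  let Y : (ℕ × ℕ) × ℕ → Prop := fun z => X (z.1.1, z.2) ∧ z.2 ≠ f z.1.1 ∧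
    min (f (Nat.pair z.1.1 z.2)) (b z.1.1 + 1) = z.1.2
  have hx : DeltaFun (n + 1) fun z : (ℕ × ℕ) × ℕ => z.1.1 := DeltaFun.fst.comp DeltaFun.fst
  have hY : DeltaPred (n + 1) Y :=
    (hX.comp (hx.pair DeltaFun.snd)).and ((DeltaPred.eq DeltaFun.snd (hf.comp hx)).not.and
      (DeltaPred.eq ((hf.comp (hx.natPair DeltaFun.snd)).min
        ((hb.comp hx).add (DeltaFun.const 1))) (DeltaFun.snd.comp DeltaFun.fst)))
  have hvalue : ∀ x, ∃ v, x < s + 1 ∨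
      ∃ S : Finset ℕ, (b x + 3) ^ (x - (s + 1)) = S.card ∧ ∀ y ∈ S, Y ((x, v), y) := fun x => by
    rcases lt_or_ge x (s + 1) with hxs | hxs
    · exact ⟨0, Or.inl hxs⟩
    obtain ⟨S, hS, hSX⟩ := hlarge x (by lia)
    rw [show x - s = x - (s + 1) + 1 by lia, pow_succ] at hS
    obtain ⟨v, T, hTS, hT, hTv⟩ :=
      exists_subset_min_eq (by positivity) hS.le (f x) fun y => f (Nat.pair x y)
    exact ⟨v, Or.inr ⟨T, hT, fun y hy => ⟨hSX y (hTS hy), hTv y hy⟩⟩⟩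
  have hfst : DeltaFun (n + 1) fun z : ℕ × ℕ => z.1 := DeltaFun.fst
  have hvalueSigma : SigmaPred (n + 1) fun z : ℕ × ℕ => z.1 < s + 1 ∨
      ∃ S : Finset ℕ, (b z.1 + 3) ^ (z.1 - (s + 1)) = S.card ∧ ∀ y ∈ S, Y (z, y) :=
    (DeltaPred.lt hfst (DeltaFun.const (s + 1))).1.or (hY.1.exists_finset
      (((hb.comp hfst).add (DeltaFun.const 3)).pow (hfst.sub (DeltaFun.const (s + 1)))))
  obtain ⟨V, hV, hVY⟩ := hvalueSigma.uniformization hvalue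
  exact ⟨fun z => Y ((z.1, V z.1), z.2),
    ⟨hY.comp ((hfst.pair (hV.comp hfst)).pair DeltaFun.snd),
      fun x hxs => (hVY x).resolve_left (by lia)⟩,
    fun z hz => hz.1, V, hV, fun x y h => h.2⟩

/-- The value of `f` at the graph of `P` is either large or a `Δ` function of the argument, since
`P` is chosen inside a decreasing sequence of sets, thinned once for every `Δ` function. -/
theorem exists_generic_function (hb : DeltaFun (n + 1) b) :
    ∃ P : ℕ → ℕ, (∀ x, P x < (b x + 3) ^ x) ∧
      (∀ f, DeltaFun (n + 1) f → ∃ g, DeltaFun (n + 1) g ∧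
        ∀ᶠ x in atTop, f (Nat.pair x (P x)) ≤ b x → f (Nat.pair x (P x)) = g x) ∧
      ∀ g, DeltaFun (n + 1) g → ∀ᶠ x in atTop, P x ≠ g x := by
  obtain ⟨F, hF⟩ := exists_enumeration_deltaFun n
  have hFΔ : ∀ s, DeltaFun (n + 1) (F s) := fun s => hF.subset (Set.mem_range_self s)
  choose! next hnext hle V hV hnextV using fun s X (h : DeltaPred (n + 1) X ∧ IsLarge b s X) =>
    h.2.exists_thinning hb (hFΔ s) h.1
  let X : ℕ → ℕ × ℕ → Prop := Nat.rec (fun z => z.2 < (b z.1 + 3) ^ z.1) next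
  have hX : ∀ s, DeltaPred (n + 1) (X s) ∧ IsLarge b s (X s) := by
    intro s
    induction s with
    | zero =>
      exact ⟨DeltaPred.lt DeltaFun.snd
        (((hb.comp DeltaFun.fst).add (DeltaFun.const 3)).pow DeltaFun.fst),
        fun x _ => ⟨Finset.range ((b x + 3) ^ x), by simp, fun y hy => Finset.mem_range.1 hy⟩⟩
    | succ s ih => exact hnext s (X s) ih
  have hanti : Antitone X := antitone_nat_of_succ_le fun s => hle s (X s) (hX s)
  have hnonempty : ∀ x, ∃ y, X x (x, y) := fun x => by
    obtain ⟨S, hS, hSX⟩ := (hX x).2 x le_rfl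
    obtain ⟨y, hy⟩ := Finset.card_pos.1 (hS ▸ by simp : 0 < S.card)
    exact ⟨y, hSX y hy⟩
  choose P hP using hnonempty
  have hPV : ∀ s, ∀ x ≥ s + 1, P x ≠ F s x ∧ min (F s (Nat.pair x (P x))) (b x + 1) = V s (X s) x :=
    fun s x hx => hnextV s (X s) (hX s) x (P x) (hanti hx _ (hP x))
  refine ⟨P, fun x => hanti x.zero_le _ (hP x), fun f hf => ?_, fun g hg => ?_⟩
  · obtain ⟨s, rfl⟩ := hF.superset hf
    refine ⟨V s (X s), hV s _ (hX s), eventually_atTop.2 ⟨s + 1, fun x hx hfb => ?_⟩⟩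
    rw [← (hPV s x hx).2, min_eq_left (by lia)]
  · obtain ⟨s, rfl⟩ := hF.superset hg
    exact eventually_atTop.2 ⟨s + 1, fun x hx => (hPV s x hx).1⟩

theorem exists_cofinal_chain (n : ℕ) :
    ∃ h : ℕ → ℕ → ℕ, (∀ k, DeltaFun (n + 1) (h k)) ∧ Monotone h ∧
      ∀ f, DeltaFun (n + 1) f → ∃ k, f ≤ h k := by
  obtain ⟨F, hF⟩ := exists_enumeration_deltaFun n
  have hFΔ : ∀ i, DeltaFun (n + 1) (F i) := fun i => hF.subset (Set.mem_range_self i)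
  let h : ℕ → ℕ → ℕ := Nat.rec (F 0) fun k g x => g x + F (k + 1) x
  refine ⟨h, fun k => ?_, monotone_nat_of_le_succ fun k x => Nat.le_add_right _ _, fun f hf => ?_⟩
  · induction k with
    | zero => exact hFΔ 0
    | succ k ih => exact ih.add (hFΔ _)
  · obtain ⟨i, rfl⟩ := hF.superset hf
    refine ⟨i, fun x => ?_⟩
    cases i with
    | zero => exact le_rfl
    | succ i => exact Nat.le_add_left _ _

/-- The generators of the tower of restricted ultrapowers. The level-`k` model consists of the
functions `g ∘ gen k` with `g` of class `Δ_{n+1}`; the level `k + 1` collapses onto level `k` below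
`bound k`, while the second component of `gen (k + 1)` is a new element. -/
structure GenericTower (n : ℕ) where
  gen : ℕ → ℕ → ℕ
  bound : ℕ → ℕ → ℕ
  gen_zero : ∀ m, gen 0 m = m
  unpair_fst_gen : ∀ k m, (gen (k + 1) m).unpair.1 = gen k m
  unpair_snd_gen_lt : ∀ k, ∃ B, DeltaFun (n + 1) B ∧ ∀ m, (gen (k + 1) m).unpair.2 < B (gen k m)
  bound_mono : Monotone bound
  exists_le_bound : ∀ f, DeltaFun (n + 1) f → ∃ k, f ≤ bound k
  collapse : ∀ k f, DeltaFun (n + 1) f → ∃ g, DeltaFun (n + 1) g ∧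
    ∀ᶠ m in atTop, f (gen (k + 1) m) ≤ bound k m → f (gen (k + 1) m) = g (gen k m)
  fresh : ∀ k g, DeltaFun (n + 1) g → ∀ᶠ m in atTop, (gen (k + 1) m).unpair.2 ≠ g (gen k m)

theorem DeltaFun.iterate_unpair_fst (k : ℕ) :
    DeltaFun (n + 1) fun x : ℕ => (fun z : ℕ => z.unpair.1)^[k] x := by
  induction k with
  | zero => exact DeltaFun.id
  | succ k ih => simpa only [Function.iterate_succ_apply'] using ih.unpair_fst

theorem exists_genericTower (n : ℕ) : Nonempty (GenericTower n) := by
  obtain ⟨h, hh, hmono, hcofinal⟩ := exists_cofinal_chain n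
  let b : ℕ → ℕ → ℕ := fun k x => h k ((fun z : ℕ => z.unpair.1)^[k] x)
  have hb : ∀ k, DeltaFun (n + 1) (b k) := fun k => (hh k).comp (DeltaFun.iterate_unpair_fst k)
  choose P hPlt hPcollapse hPfresh using fun k => exists_generic_function (hb k)
  let q : ℕ → ℕ → ℕ := Nat.rec (fun m => m) fun k qk m => Nat.pair (qk m) (P k (qk m))
  have hq : ∀ k m, q (k + 1) m = Nat.pair (q k m) (P k (q k m)) := fun _ _ => rfl
  have hb_gen : ∀ k m, b k (q k m) = h k m := fun k m => by
    suffices (fun z : ℕ => z.unpair.1)^[k] (q k m) = m from congrArg (h k) this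
    induction k with
    | zero => rfl
    | succ k ih => rw [Function.iterate_succ_apply, hq, Nat.unpair_pair, ih]
  have htendsto : ∀ k, Tendsto (q k) atTop atTop := fun k => by
    refine tendsto_atTop_mono (fun m => ?_) tendsto_id
    induction k with
    | zero => exact le_rfl
    | succ k ih => exact ih.trans (Nat.left_le_pair _ _)
  refine ⟨{
    gen := q
    bound := h
    gen_zero := fun _ => rfl
    unpair_fst_gen := fun k m => by rw [hq, Nat.unpair_pair]
    unpair_snd_gen_lt := fun k => ⟨fun x => (b k x + 3) ^ x,
      ((hb k).add (DeltaFun.const 3)).pow DeltaFun.id,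
      fun m => by rw [hq, Nat.unpair_pair]; exact hPlt k _⟩
    bound_mono := hmono
    exists_le_bound := hcofinal
    collapse := fun k f hf => ?_
    fresh := fun k g hg => ?_ }⟩
  · obtain ⟨g, hg, hgf⟩ := hPcollapse k f hf
    exact ⟨g, hg, ((htendsto k).eventually hgf).mono fun m hm => by rwa [hb_gen, ← hq] at hm⟩
  · exact ((htendsto k).eventually (hPfresh k g hg)).mono fun m hm => by rwa [hq, Nat.unpair_pair]

namespace GenericTower

variable (C : GenericTower n) {k K : ℕ}

theorem exists_lift (hk : k ≤ K) (hf : DeltaFun (n + 1) f) :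
    ∃ g, DeltaFun (n + 1) g ∧ ∀ m, f (C.gen k m) = g (C.gen K m) := by
  induction hk with
  | refl => exact ⟨f, hf, fun _ => rfl⟩
  | step _ ih =>
    obtain ⟨g, hg, h⟩ := ih
    exact ⟨fun x => g x.unpair.1, hg.comp (DeltaFun.unpair_fst DeltaFun.id), fun m =>
      (h m).trans (congrArg g (C.unpair_fst_gen _ m).symm)⟩

theorem exists_collapse (hk : k ≤ K) (hf : DeltaFun (n + 1) f) :
    ∃ g, DeltaFun (n + 1) g ∧
      ∀ᶠ m in atTop, f (C.gen K m) ≤ C.bound k m → f (C.gen K m) = g (C.gen k m) := by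
  induction hk generalizing f with
  | refl => exact ⟨f, hf, Eventually.of_forall fun _ _ => rfl⟩
  | @step K hk ih =>
    obtain ⟨g, hg, hfg⟩ := C.collapse K f hf
    obtain ⟨g', hg', hgg'⟩ := ih hg
    refine ⟨g', hg', ?_⟩
    filter_upwards [hfg, hgg'] with m hm hm' hle
    have hfgm := hm (hle.trans (C.bound_mono hk m))
    rw [hfgm, hm' (hfgm ▸ hle)]

theorem exists_le_comp_gen_zero (hf : DeltaFun (n + 1) f) :
    ∃ g, DeltaFun (n + 1) g ∧ ∀ m, f (C.gen K m) ≤ g m := by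
  induction K generalizing f with
  | zero => exact ⟨f, hf, fun m => by rw [C.gen_zero]⟩
  | succ K ih =>
    obtain ⟨B, hB, hlt⟩ := C.unpair_snd_gen_lt K
    have hmax : DeltaPred (n + 1) fun z : ℕ × ℕ => ∀ i < B z.1, f (Nat.pair z.1 i) ≤ z.2 :=
      DeltaPred.forall_lt (p := fun w : (ℕ × ℕ) × ℕ => f (Nat.pair w.1.1 w.2) ≤ w.1.2)
        (DeltaPred.le (hf.comp ((DeltaFun.fst.comp DeltaFun.fst).natPair DeltaFun.snd))
          (DeltaFun.snd.comp DeltaFun.fst))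
        (hB.comp DeltaFun.fst)
    obtain ⟨max, hmaxΔ, hfmax⟩ := hmax.exists_isLeast fun x =>
      ⟨(Finset.range (B x)).sup fun i => f (Nat.pair x i),
        fun i hi => Finset.le_sup (f := fun i => f (Nat.pair x i)) (Finset.mem_range.2 hi)⟩
    obtain ⟨g, hg, hle⟩ := ih hmaxΔ
    refine ⟨g, hg, fun m => le_trans ?_ (hle m)⟩
    have hgen := (hfmax (C.gen K m)).1 _ (hlt m)
    rwa [← C.unpair_fst_gen, Nat.pair_unpair, C.unpair_fst_gen] at hgen

theorem exists_comp_gen_le_bound (hf : DeltaFun (n + 1) f) :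
    ∃ k, ∀ m, f (C.gen K m) ≤ C.bound k m := by
  obtain ⟨g, hg, hfg⟩ := C.exists_le_comp_gen_zero (K := K) hf
  obtain ⟨k, hk⟩ := C.exists_le_bound g hg
  exact ⟨k, fun m => (hfg m).trans (hk m)⟩

end GenericTower

end GenericTower

section Realize

variable {M : Type} [lang.Structure M] {α : Type} {l : ℕ}

theorem realize_ltFm (t u : lang.Term (α ⊕ Fin l)) (v : α → M) (xs : Fin l → M) :
    (ltFm t u).Realize v xs ↔ t.realize (Sum.elim v xs) < u.realize (Sum.elim v xs) :=
  BoundedFormula.realize_rel₂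

theorem realize_liftAt_one_snoc (t : lang.Term (α ⊕ Fin l)) (v : α → M) (xs : Fin l → M) (y : M) :
    (t.liftAt 1 l).realize (Sum.elim v (Fin.snoc xs y : Fin (l + 1) → M)) =
      t.realize (Sum.elim v xs) := by
  rw [Term.realize_liftAt]
  congr 1
  funext i
  rcases i with a | i
  · rfl
  · simp only [Function.comp, Sum.map_inr, Sum.elim_inr, i.2, if_true]
    exact Fin.snoc_castSucc (α := fun _ => M) y xs i

theorem realize_bdAll (t : lang.Term (α ⊕ Fin l)) (φ : lang.BoundedFormula α (l + 1)) (v : α → M)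
    (xs : Fin l → M) :
    (BoundedFormula.all ((ltFm (Term.var (Sum.inr (Fin.last l))) (t.liftAt 1 l)).imp φ)).Realize
      v xs ↔ ∀ y, y < t.realize (Sum.elim v xs) → φ.Realize v (Fin.snoc xs y) := by
  simp [realize_ltFm, realize_liftAt_one_snoc]

end Realize

section StandardModel

/-- The standard model: a synonym of `ℕ`, so that the operations induced by the `lang`-structure do
not clash with those of `ℕ`. -/
def StdNat : Type := ℕ

/-- The interpretation of the function symbols in the standard model. -/
def natFunMap : ∀ {k : ℕ}, Func k → (Fin k → ℕ) → ℕ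
  | _, Func.zero, _ => 0
  | _, Func.one, _ => 1
  | _, Func.add, x => x 0 + x 1
  | _, Func.mul, x => x 0 * x 1

/-- The interpretation of the relation symbols in the standard model. -/
def natRelMap : ∀ {k : ℕ}, Rel k → (Fin k → ℕ) → Prop
  | _, Rel.lt, x => x 0 < x 1

instance : lang.Structure StdNat where
  funMap f x := natFunMap f x
  RelMap r x := natRelMap r x

/-- The value of a term in the standard model. -/
def evalNat {α : Type} (t : lang.Term α) (c : α → ℕ) : ℕ := t.realize (M := StdNat) c

/-- Truth of a formula in the standard model. -/
def RealizeNat {α : Type} {l : ℕ} (φ : lang.BoundedFormula α l) (v : α → ℕ) (xs : Fin l → ℕ) :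
    Prop :=
  φ.Realize (M := StdNat) v xs

variable {α : Type} {l : ℕ}

section

variable (v : α → ℕ) (xs : Fin l → ℕ)

theorem realizeNat_all (φ : lang.BoundedFormula α (l + 1)) :
    RealizeNat φ.all v xs ↔ ∀ y : ℕ, RealizeNat φ v (Fin.snoc xs y) := Iff.rfl

theorem realizeNat_ex (φ : lang.BoundedFormula α (l + 1)) :
    RealizeNat φ.ex v xs ↔ ∃ y : ℕ, RealizeNat φ v (Fin.snoc xs y) :=
  BoundedFormula.realize_ex (M := StdNat)

theorem realizeNat_bdAll (t : lang.Term (α ⊕ Fin l)) (φ : lang.BoundedFormula α (l + 1)) :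
    RealizeNat
      (BoundedFormula.all ((ltFm (Term.var (Sum.inr (Fin.last l))) (t.liftAt 1 l)).imp φ)) v xs ↔
      ∀ y < evalNat t (Sum.elim v xs), RealizeNat φ v (Fin.snoc xs y) :=
  realize_bdAll (M := StdNat) t φ v xs

end

section PrimrecCoordinates

variable {X : Type} [Primcodable X] {v : α → X → ℕ} {c : Fin l → X → ℕ} {m : ℕ}

theorem primrec_evalNat {β : Type} (t : lang.Term β) {c : β → X → ℕ} (hc : ∀ b, Primrec (c b)) :
    Primrec fun x => evalNat t fun b => c b x := by
  induction t with
  | var b => exact hc b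
  | func f ts ih =>
    cases f with
    | zero => exact Primrec.const 0
    | one => exact Primrec.const 1
    | add => exact Primrec.nat_add.comp (ih 0) (ih 1)
    | mul => exact Primrec.nat_mul.comp (ih 0) (ih 1)

theorem primrec_evalNat_elim (t : lang.Term (α ⊕ Fin l)) (hv : ∀ a, Primrec (v a))
    (hc : ∀ i, Primrec (c i)) :
    Primrec fun x => evalNat t (Sum.elim (fun a => v a x) fun i => c i x) :=
  (primrec_evalNat t (c := Sum.elim v c) (Sum.rec hv hc)).of_eq fun _ =>
    congrArg (evalNat t) (funext (Sum.rec (fun _ => rfl) fun _ => rfl))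

theorem primrec_snoc (hc : ∀ i, Primrec (c i)) (i : Fin (l + 1)) :
    Primrec fun z : X × ℕ => (Fin.snoc (fun i => c i z.1) z.2 : Fin (l + 1) → ℕ) i := by
  refine Fin.lastCases ?_ (fun j => ?_) i
  · simpa using Primrec.snd
  · simpa using (hc j).comp Primrec.fst

theorem IsDelta0.sigmaPred_zero {φ : lang.BoundedFormula α l} (h : IsDelta0 l φ)
    (hv : ∀ a, Primrec (v a)) (hc : ∀ i, Primrec (c i)) :
    SigmaPred 0 fun x => RealizeNat φ (fun a => v a x) fun i => c i x := by
  induction h generalizing X with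
  | falsum n => exact (DeltaPred.const False).1
  | equal n t u =>
    exact PrimrecRel.comp (R := fun a b : ℕ => a = b) Primrec.eq (primrec_evalNat_elim t hv hc)
      (primrec_evalNat_elim u hv hc)
  | rel n l R ts =>
    cases R
    exact Primrec.nat_lt.comp (primrec_evalNat_elim (ts 0) hv hc)
      (primrec_evalNat_elim (ts 1) hv hc)
  | imp n _ _ ih₁ ih₂ =>
    exact (SigmaPred.or (k := 0) (PrimrecPred.not (ih₁ hv hc)) (ih₂ hv hc)).of_eq fun _ =>
      imp_iff_not_or.symm
  | bdAll n t _ ih =>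
    exact ((ih (fun a => (hv a).comp Primrec.fst) (primrec_snoc hc)).forall_lt
      (primrec_evalNat_elim t hv hc)).of_eq fun _ => (realizeNat_bdAll _ _ t _).symm

mutual

theorem SigmaFm.sigmaPred {m l : ℕ} {φ : lang.BoundedFormula α l} (h : SigmaFm m l φ)
    {X : Type} [Primcodable X] {v : α → X → ℕ} {c : Fin l → X → ℕ}
    (hv : ∀ a, Primrec (v a)) (hc : ∀ i, Primrec (c i)) :
    SigmaPred m fun x => RealizeNat φ (fun a => v a x) fun i => c i x :=
  match h with
  | .delta0 _ _ h => SigmaPred.mono (h.sigmaPred_zero hv hc) m.zero_le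
  | .ofPi _ _ h => SigmaPred.of_not (h.sigmaPred_not hv hc)
  | .ex _ _ h =>
    (SigmaPred.exists_nat (h.sigmaPred (fun a => (hv a).comp Primrec.fst)
      (primrec_snoc hc))).of_eq fun x =>
        (realizeNat_ex (fun a => v a x) (fun i => c i x) _).symm

theorem PiFm.sigmaPred_not {m l : ℕ} {φ : lang.BoundedFormula α l} (h : PiFm m l φ)
    {X : Type} [Primcodable X] {v : α → X → ℕ} {c : Fin l → X → ℕ}
    (hv : ∀ a, Primrec (v a)) (hc : ∀ i, Primrec (c i)) :
    SigmaPred m fun x => ¬ RealizeNat φ (fun a => v a x) fun i => c i x :=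
  match h with
  | .delta0 _ _ h => SigmaPred.mono (k := 0) (PrimrecPred.not (h.sigmaPred_zero hv hc)) m.zero_le
  | .ofSigma _ _ h => SigmaPred.not (h.sigmaPred hv hc)
  | .all _ _ h =>
    (SigmaPred.exists_nat (h.sigmaPred_not (fun a => (hv a).comp Primrec.fst)
      (primrec_snoc hc))).of_eq fun _ => not_forall.symm

end

end PrimrecCoordinates

section DeltaFunCoordinates

variable {X : Type} [Primcodable X] {v : α → X → ℕ} {c : Fin l → X → ℕ} {m n : ℕ}
  {φ : lang.BoundedFormula α l}

theorem DeltaFun.snoc (hc : ∀ i, DeltaFun (n + 1) (c i)) {f : X → ℕ} (hf : DeltaFun (n + 1) f)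
    (i : Fin (l + 1)) :
    DeltaFun (n + 1) fun x => (Fin.snoc (fun i => c i x) (f x) : Fin (l + 1) → ℕ) i := by
  refine Fin.lastCases ?_ (fun j => ?_) i
  · simpa using hf
  · simpa using hc j

/-- The truth value of `φ` is `Δ_{n+1}` under all `Δ_{n+1}` assignments of its variables. -/
def IsDeltaFm (n : ℕ) (φ : lang.BoundedFormula α l) : Prop :=
  ∀ (X : Type) [Primcodable X] [Inhabited X] (v : α → X → ℕ) (c : Fin l → X → ℕ),
    (∀ a, DeltaFun (n + 1) (v a)) → (∀ i, DeltaFun (n + 1) (c i)) →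
      DeltaPred (n + 1) fun x => RealizeNat φ (fun a => v a x) fun i => c i x

theorem IsDeltaFm.not (h : IsDeltaFm n φ) : IsDeltaFm n φ.not :=
  fun X _ _ v c hv hc => (h X v c hv hc).not

variable [Inhabited X]

theorem DeltaFun.pi {f : Fin l → X → ℕ} (hf : ∀ i, DeltaFun (n + 1) (f i)) :
    DeltaFun (n + 1) fun x i => f i x :=
  (DeltaPred.forall_finite fun i => DeltaPred.eq (DeltaFun.comp (hf i) DeltaFun.fst)
    (.of_primrec (Primrec.fin_app.comp Primrec.snd (Primrec.const i)))).1.of_eq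
      fun _ => funext_iff.symm

variable [Finite α]

theorem exists_primrec_coordinates (hv : ∀ a, DeltaFun (n + 1) (v a))
    (hc : ∀ i, DeltaFun (n + 1) (c i)) :
    ∃ (p : ℕ) (g : X → (Fin p → ℕ) × (Fin l → ℕ)) (e : α → Fin p), DeltaFun (n + 1) g ∧
      (∀ a, Primrec fun z : (Fin p → ℕ) × (Fin l → ℕ) => z.1 (e a)) ∧
      (∀ i, Primrec fun z : (Fin p → ℕ) × (Fin l → ℕ) => z.2 i) ∧
      ∀ x, (∀ a, (g x).1 (e a) = v a x) ∧ ∀ i, (g x).2 i = c i x := by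
  obtain ⟨p, ⟨e⟩⟩ := Finite.exists_equiv_fin α
  exact ⟨p, _, e, (DeltaFun.pi fun j => hv (e.symm j)).pair (DeltaFun.pi hc),
    fun a => Primrec.fin_app.comp Primrec.fst (Primrec.const (e a)),
    fun i => Primrec.fin_app.comp Primrec.snd (Primrec.const i), fun x => by simp⟩

theorem SigmaFm.sigmaPred_succ (h : SigmaFm (n + 1) l φ) (hv : ∀ a, DeltaFun (n + 1) (v a))
    (hc : ∀ i, DeltaFun (n + 1) (c i)) :
    SigmaPred (n + 1) fun x => RealizeNat φ (fun a => v a x) fun i => c i x := by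
  obtain ⟨p, g, e, hg, hfst, hsnd, hgx⟩ := exists_primrec_coordinates hv hc
  simpa only [hgx] using (h.sigmaPred hfst hsnd).comp_deltaFun hg

theorem SigmaFm.isDeltaFm (h : SigmaFm m l φ) (hm : m ≤ n) : IsDeltaFm n φ := by
  intro X _ _ v c hv hc
  obtain ⟨p, g, e, hg, hfst, hsnd, hgx⟩ := exists_primrec_coordinates hv hc
  simpa only [hgx] using
    (DeltaPred.of_sigmaPred ((h.sigmaPred hfst hsnd).mono hm)).comp hg

theorem PiFm.isDeltaFm (h : PiFm m l φ) (hm : m ≤ n) : IsDeltaFm n φ := by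
  intro X _ _ v c hv hc
  obtain ⟨p, g, e, hg, hfst, hsnd, hgx⟩ := exists_primrec_coordinates hv hc
  simpa only [hgx] using
    (DeltaPred.of_sigmaPred ((h.sigmaPred_not hfst hsnd).mono hm)).of_not.comp hg

end DeltaFunCoordinates

end StandardModel

section Model

open Filter

/-- The ultrapower of the standard model by a fixed nonprincipal ultrafilter on `ℕ`. -/
noncomputable abbrev HyperNat : Type := (hyperfilter ℕ : Filter ℕ).Product fun _ => StdNat

/-- The class of a sequence in `HyperNat`. -/
noncomputable def germ (f : ℕ → ℕ) : HyperNat := Quotient.mk _ f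

theorem germ_eq_germ {f g : ℕ → ℕ} : germ f = germ g ↔ ∀ᶠ m in hyperfilter ℕ, f m = g m :=
  Quotient.eq

theorem funMap_germ {l : ℕ} (F : lang.Functions l) (f : Fin l → ℕ → ℕ) :
    Structure.funMap F (fun i => germ (f i)) = germ fun m => natFunMap F fun i => f i m :=
  Ultraproduct.funMap_cast (M := fun _ => StdNat) F f

theorem realize_germ {α : Type} {l : ℕ} (φ : lang.BoundedFormula α l) (v : α → ℕ → ℕ)
    (xs : Fin l → ℕ → ℕ) :
    φ.Realize (fun a => germ (v a)) (fun i => germ (xs i)) ↔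
      ∀ᶠ m in hyperfilter ℕ, RealizeNat φ (fun a => v a m) fun i => xs i m :=
  have : ∀ _ : ℕ, Nonempty StdNat := fun _ => ⟨(0 : ℕ)⟩
  Ultraproduct.boundedFormula_realize_cast (M := fun _ => StdNat) φ v xs

theorem germ_zero : (0 : HyperNat) = germ fun _ => 0 :=
  (congrArg (Structure.funMap (L := lang) Func.zero) (Subsingleton.elim _ _)).trans
    (funMap_germ Func.zero ![])

theorem germ_one : (1 : HyperNat) = germ fun _ => 1 :=
  (congrArg (Structure.funMap (L := lang) Func.one) (Subsingleton.elim _ _)).trans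
    (funMap_germ Func.one ![])

theorem germ_add (f g : ℕ → ℕ) : germ f + germ g = germ fun m => f m + g m :=
  (congrArg _ (List.ofFn_injective rfl)).trans (funMap_germ Func.add ![f, g])

theorem germ_mul (f g : ℕ → ℕ) : germ f * germ g = germ fun m => f m * g m :=
  (congrArg _ (List.ofFn_injective rfl)).trans (funMap_germ Func.mul ![f, g])

theorem germ_lt_germ {f g : ℕ → ℕ} : germ f < germ g ↔ ∀ᶠ m in hyperfilter ℕ, f m < g m :=
  (realize_ltFm (Term.var (Sum.inl 0)) (Term.var (Sum.inl 1)) (fun i => germ (![f, g] i))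
    fun i : Fin 0 => germ (i.elim0)).symm.trans (realize_germ (ltFm _ _) ![f, g] _)

theorem DeltaFun.natFunMap {n l : ℕ} {X : Type} [Primcodable X] (F : Func l) {f : Fin l → X → ℕ}
    (hf : ∀ i, DeltaFun (n + 1) (f i)) : DeltaFun (n + 1) fun x => natFunMap F fun i => f i x := by
  cases F with
  | zero => exact DeltaFun.const 0
  | one => exact DeltaFun.const 1
  | add => exact (hf 0).add (hf 1)
  | mul => exact (hf 0).mul (hf 1)

namespace GenericTower

variable {n : ℕ} (C : GenericTower n)

/-- The restricted ultrapower `M_k`, consisting of the classes of the sequences `g ∘ gen k` with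
`g` a `Δ_{n+1}` function. -/
def level (k : ℕ) : lang.Substructure HyperNat where
  carrier := {x | ∃ g, DeltaFun (n + 1) g ∧ x = germ fun m => g (C.gen k m)}
  fun_mem F x hx := by
    choose g hg h using hx
    exact ⟨_, DeltaFun.natFunMap F hg, by rw [funext h, funMap_germ]⟩

theorem level_mono : Monotone C.level := by
  rintro k K hk _ ⟨g, hg, rfl⟩
  obtain ⟨g', hg', h⟩ := C.exists_lift hk hg
  exact ⟨g', hg', congrArg germ (funext h)⟩

/-- The union of the tower `M_0 ⊆ M_1 ⊆ …` of restricted ultrapowers. -/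
def Model : Type := ↥(⨆ k, C.level k)

noncomputable instance : lang.Structure C.Model :=
  inferInstanceAs (lang.Structure ↥(⨆ k, C.level k))

/-- The inclusion of the model into the full ultrapower. -/
noncomputable def incl : C.Model ↪[lang] HyperNat := (⨆ k, C.level k).subtype

/-- The element of the model represented by `g ∘ gen k`. -/
noncomputable def germAt (k : ℕ) (g : ℕ → ℕ) (hg : DeltaFun (n + 1) g) : C.Model :=
  ⟨germ fun m => g (C.gen k m), le_iSup C.level k ⟨g, hg, rfl⟩⟩

variable {C}

theorem exists_incl_eq_germ {ι : Type} [Finite ι] (v : ι → C.Model) (k : ℕ) :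
    ∃ K ≥ k, ∃ f : ι → ℕ → ℕ, (∀ i, DeltaFun (n + 1) (f i)) ∧
      ∀ i, C.incl (v i) = germ fun m => f i (C.gen K m) := by
  choose l hl using fun i =>
    (Substructure.mem_iSup_of_directed C.level_mono.directed_le).1 (v i).2
  obtain ⟨K, hK⟩ := Finite.exists_le l
  choose f hf h using fun i => C.level_mono ((hK i).trans (le_max_left K k)) (hl i)
  exact ⟨max K k, le_max_right K k, f, hf, h⟩

theorem realize_incl_snoc {α : Type} {l : ℕ} (φ : lang.BoundedFormula α (l + 1))
    (v : α → C.Model) (xs : Fin l → C.Model) (y : C.Model) :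
    φ.Realize (C.incl ∘ v) (Fin.snoc (C.incl ∘ xs) (C.incl y)) ↔
      φ.Realize (C.incl ∘ v) (C.incl ∘ (Fin.snoc xs y : Fin (l + 1) → C.Model)) := by
  rw [Fin.comp_snoc]

theorem realize_germ_snoc {α : Type} {l : ℕ} (φ : lang.BoundedFormula α (l + 1)) (v : α → ℕ → ℕ)
    (xs : Fin l → ℕ → ℕ) (y : ℕ → ℕ) :
    φ.Realize (fun a => germ (v a)) (Fin.snoc (fun i => germ (xs i)) (germ y)) ↔
      ∀ᶠ m in hyperfilter ℕ, RealizeNat φ (fun a => v a m) (Fin.snoc (fun i => xs i m) (y m)) := by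
  convert realize_germ φ v (Fin.snoc xs y) using 2
  · exact (Fin.comp_snoc germ xs y).symm
  · exact funext fun m => congrArg _ (Fin.comp_snoc (fun f : ℕ → ℕ => f m) xs y).symm

/-- Łoś's theorem for `φ`: its truth in the model is its truth in the full ultrapower. -/
def SatisfiesLos (C : GenericTower n) {α : Type} {l : ℕ} (φ : lang.BoundedFormula α l) : Prop :=
  ∀ v xs, φ.Realize (M := C.Model) v xs ↔ φ.Realize (C.incl ∘ v) (C.incl ∘ xs)

namespace SatisfiesLos

variable {α : Type} {l : ℕ}

theorem of_isAtomic {φ : lang.BoundedFormula α l} (h : φ.IsAtomic) : C.SatisfiesLos φ :=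
  fun _ _ => (h.isQF.realize_embedding C.incl).symm

theorem imp {φ ψ : lang.BoundedFormula α l} (hφ : C.SatisfiesLos φ) (hψ : C.SatisfiesLos ψ) :
    C.SatisfiesLos (φ.imp ψ) := fun v xs => imp_congr (hφ v xs) (hψ v xs)

theorem all [Finite α] {φ : lang.BoundedFormula α (l + 1)} (h : C.SatisfiesLos φ)
    (hφ : IsDeltaFm n φ) (hall : IsDeltaFm n φ.all) : C.SatisfiesLos φ.all := by
  intro v xs
  refine ⟨fun H => ?_, fun H y => (h _ _).2 ((realize_incl_snoc φ v xs y).1 (H (C.incl y)))⟩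
  obtain ⟨K, -, f, hf, hfv⟩ := exists_incl_eq_germ (Sum.elim v xs) 0
  have hΔ := hφ (ℕ × ℕ) _ _ (fun a => (hf (.inl a)).comp DeltaFun.fst)
    (DeltaFun.snoc (fun i => (hf (.inr i)).comp DeltaFun.fst) DeltaFun.snd)
  obtain ⟨t, ht, hskolem⟩ := hΔ.not.exists_skolem
    ((hall ℕ _ _ (fun a => hf (.inl a)) fun i => hf (.inr i)).not.of_eq fun _ => not_forall)
  have hv : C.incl ∘ v = fun a => germ fun m => f (.inl a) (C.gen K m) :=
    funext fun a => hfv (.inl a)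
  have hxs : C.incl ∘ xs = fun i => germ fun m => f (.inr i) (C.gen K m) :=
    funext fun i => hfv (.inr i)
  have hwitness := (realize_incl_snoc φ v xs (C.germAt K t ht)).2 ((h _ _).1 (H _))
  rw [hv, hxs] at hwitness ⊢
  refine (realize_germ φ.all _ _).2 (((realize_germ_snoc φ _ _ _).1 hwitness).mono fun m hm => ?_)
  by_contra hne
  exact hskolem (C.gen K m) (not_forall.1 hne) hm

theorem not {φ : lang.BoundedFormula α l} (h : C.SatisfiesLos φ) : C.SatisfiesLos φ.not :=
  fun v xs => not_congr (h v xs)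

theorem ex [Finite α] {φ : lang.BoundedFormula α (l + 1)} (h : C.SatisfiesLos φ)
    (hφ : IsDeltaFm n φ) (hex : IsDeltaFm n φ.ex) : C.SatisfiesLos φ.ex :=
  (h.not.all hφ.not fun X _ _ v c hv hc => (hex X v c hv hc).of_not).not

end SatisfiesLos

end GenericTower

variable {n : ℕ} {C : GenericTower n}

theorem IsDelta0.satisfiesLos {α : Type} [Finite α] {l : ℕ}
    {φ : lang.BoundedFormula α l} (h : IsDelta0 l φ) : C.SatisfiesLos φ := by
  induction h with
  | falsum n => exact fun _ _ => Iff.rfl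
  | equal n t u => exact .of_isAtomic (.equal t u)
  | rel n l R ts => exact .of_isAtomic (.rel R ts)
  | imp n _ _ ih₁ ih₂ => exact ih₁.imp ih₂
  | bdAll n t h ih =>
    refine ((GenericTower.SatisfiesLos.of_isAtomic (.rel _ _)).imp ih).all ?_ ?_
    · exact (SigmaFm.delta0 0 _ (.imp _ (.rel _ _ _ _) h)).isDeltaFm (Nat.zero_le _)
    · exact (SigmaFm.delta0 0 _ (.bdAll _ t h)).isDeltaFm (Nat.zero_le _)

mutual

theorem SigmaFm.satisfiesLos {α : Type} [Finite α] {m l : ℕ}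
    {φ : lang.BoundedFormula α l} (h : SigmaFm m l φ) (hm : m ≤ n) : C.SatisfiesLos φ :=
  match h with
  | .delta0 _ _ h => h.satisfiesLos
  | .ofPi _ _ h => h.satisfiesLos (Nat.le_of_succ_le hm)
  | .ex _ _ h => (h.satisfiesLos hm).ex (h.isDeltaFm hm) (SigmaFm.isDeltaFm (.ex _ _ h) hm)

theorem PiFm.satisfiesLos {α : Type} [Finite α] {m l : ℕ}
    {φ : lang.BoundedFormula α l} (h : PiFm m l φ) (hm : m ≤ n) : C.SatisfiesLos φ :=
  match h with
  | .delta0 _ _ h => h.satisfiesLos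
  | .ofSigma _ _ h => h.satisfiesLos (Nat.le_of_succ_le hm)
  | .all _ _ h => (h.satisfiesLos hm).all (h.isDeltaFm hm) (PiFm.isDeltaFm (.all _ _ h) hm)

end

end Model

section ModelArithmetic

open Filter

namespace GenericTower

variable {n : ℕ} {C : GenericTower n}

theorem exists_eq_germAt {ι : Type} [Finite ι] (v : ι → C.Model) (k : ℕ) :
    ∃ K ≥ k, ∃ (f : ι → ℕ → ℕ) (hf : ∀ i, DeltaFun (n + 1) (f i)),
      v = fun i => C.germAt K (f i) (hf i) := by
  obtain ⟨K, hK, f, hf, h⟩ := exists_incl_eq_germ v k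
  exact ⟨K, hK, f, hf, funext fun i => C.incl.injective (h i)⟩

theorem forall_germAt₃ {p : C.Model → C.Model → C.Model → Prop}
    (h : ∀ K f g e hf hg he, p (C.germAt K f hf) (C.germAt K g hg) (C.germAt K e he))
    (x y z : C.Model) : p x y z := by
  obtain ⟨K, -, f, hf, hxyz⟩ := exists_eq_germAt ![x, y, z] 0
  have := h K _ _ _ (hf 0) (hf 1) (hf 2)
  rwa [← congrFun hxyz 0, ← congrFun hxyz 1, ← congrFun hxyz 2] at this

theorem forall_germAt₂ {p : C.Model → C.Model → Prop}
    (h : ∀ K f g hf hg, p (C.germAt K f hf) (C.germAt K g hg)) (x y : C.Model) : p x y :=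
  forall_germAt₃ (p := fun x y _ => p x y) (fun K f g _ hf hg _ => h K f g hf hg) x y y

theorem forall_germAt {p : C.Model → Prop} (h : ∀ K f hf, p (C.germAt K f hf)) (x : C.Model) :
    p x :=
  forall_germAt₂ (p := fun x _ => p x) (fun K f _ hf _ => h K f hf) x x

variable {K : ℕ} {f g : ℕ → ℕ} (hf : DeltaFun (n + 1) f) (hg : DeltaFun (n + 1) g)

theorem germAt_eq_germAt :
    C.germAt K f hf = C.germAt K g hg ↔
      ∀ᶠ m in hyperfilter ℕ, f (C.gen K m) = g (C.gen K m) :=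
  C.incl.injective.eq_iff.symm.trans germ_eq_germ

theorem germAt_lt_germAt :
    C.germAt K f hf < C.germAt K g hg ↔
      ∀ᶠ m in hyperfilter ℕ, f (C.gen K m) < g (C.gen K m) :=
  germ_lt_germ

theorem germAt_le_germAt :
    C.germAt K f hf ≤ C.germAt K g hg ↔
      ∀ᶠ m in hyperfilter ℕ, f (C.gen K m) ≤ g (C.gen K m) := by
  simp only [le_iff_lt_or_eq, Ultrafilter.eventually_or]
  exact or_congr (germAt_lt_germAt hf hg) (germAt_eq_germAt hf hg)

theorem germAt_add :
    C.germAt K f hf + C.germAt K g hg = C.germAt K (fun x => f x + g x) (hf.add hg) :=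
  C.incl.injective (germ_add _ _)

theorem germAt_mul :
    C.germAt K f hf * C.germAt K g hg = C.germAt K (fun x => f x * g x) (hf.mul hg) :=
  C.incl.injective (germ_mul _ _)

theorem zero_eq_germAt (K : ℕ) : (0 : C.Model) = C.germAt K (fun _ => 0) (.const 0) :=
  C.incl.injective germ_zero

theorem one_eq_germAt (K : ℕ) : (1 : C.Model) = C.germAt K (fun _ => 1) (.const 1) :=
  C.incl.injective germ_one

theorem pam_model (C : GenericTower n) : PAm C.Model where
  add_assoc := forall_germAt₃ fun K f g e hf hg he => by
    simp only [germAt_add, add_assoc]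
  add_comm := forall_germAt₂ fun K f g hf hg => by
    simp only [germAt_add, add_comm]
  mul_assoc := forall_germAt₃ fun K f g e hf hg he => by
    simp only [germAt_mul, mul_assoc]
  mul_comm := forall_germAt₂ fun K f g hf hg => by
    simp only [germAt_mul, mul_comm]
  ldistrib := forall_germAt₃ fun K f g e hf hg he => by
    simp only [germAt_add, germAt_mul, mul_add]
  add_zero := forall_germAt fun K f hf => by
    simp only [zero_eq_germAt K, germAt_add, add_zero]
  mul_zero := forall_germAt fun K f hf => by
    simp only [zero_eq_germAt K, germAt_mul, mul_zero]
  mul_one := forall_germAt fun K f hf => by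
    simp only [one_eq_germAt K, germAt_mul, mul_one]
  lt_trans := forall_germAt₃ fun K f g e hf hg he => by
    simp only [germAt_lt_germAt]
    exact fun h₁ h₂ => by filter_upwards [h₁, h₂] with m using lt_trans
  lt_irrefl := forall_germAt fun K f hf => by
    simp [germAt_lt_germAt, (hyperfilter ℕ).neBot.ne]
  lt_total := forall_germAt₂ fun K f g hf hg => by
    simp only [germAt_lt_germAt, germAt_eq_germAt, ← Ultrafilter.eventually_or]
    exact .of_forall fun m => lt_trichotomy _ _
  add_lt_add := forall_germAt₃ fun K f g e hf hg he => by
    simp only [germAt_lt_germAt, germAt_add]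
    exact fun h => h.mono fun m hm => Nat.add_lt_add_right hm _
  mul_lt_mul := forall_germAt₃ fun K f g e hf hg he => by
    simp only [zero_eq_germAt K, germAt_lt_germAt, germAt_mul]
    exact fun h₁ h₂ => by filter_upwards [h₁, h₂] with m using Nat.mul_lt_mul_of_pos_right
  sub_exists := forall_germAt₂ fun K f g hf hg h => by
    refine ⟨C.germAt K (fun x => g x - f x) (hg.sub hf), ?_⟩
    rw [germAt_add, germAt_eq_germAt]
    exact ((germAt_lt_germAt hf hg).1 h).mono fun m hm => Nat.add_sub_of_le hm.le
  zero_lt_one := by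
    rw [zero_eq_germAt 0, one_eq_germAt 0, germAt_lt_germAt]
    exact .of_forall fun _ => Nat.zero_lt_one
  discrete := forall_germAt fun K f hf => by
    rw [zero_eq_germAt K, one_eq_germAt K, germAt_lt_germAt, germAt_le_germAt]
    exact id
  zero_le := forall_germAt fun K f hf => by
    rw [zero_eq_germAt K, germAt_le_germAt]
    exact .of_forall fun _ => Nat.zero_le _

theorem SatisfiesLos.realize_iff_eventually {α : Type} {l : ℕ} {φ : lang.BoundedFormula α l}
    (h : C.SatisfiesLos φ) {v : α → C.Model} {xs : Fin l → C.Model} {f : α → ℕ → ℕ}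
    {g : Fin l → ℕ → ℕ} (hv : ∀ a, C.incl (v a) = germ fun m => f a (C.gen K m))
    (hxs : ∀ i, C.incl (xs i) = germ fun m => g i (C.gen K m)) :
    φ.Realize v xs ↔ ∀ᶠ m in hyperfilter ℕ,
      RealizeNat φ (fun a => f a (C.gen K m)) fun i => g i (C.gen K m) := by
  rw [h v xs, show C.incl ∘ v = _ from funext hv, show C.incl ∘ xs = _ from funext hxs]
  exact realize_germ φ (fun a m => f a (C.gen K m)) fun i m => g i (C.gen K m)

theorem exists_deltaPred_of_sigmaDef1 {A : Set C.Model} (hA : SigmaDef1 n C.Model A)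
    (x : C.Model) :
    ∃ (K : ℕ) (f : ℕ → ℕ) (hf : DeltaFun (n + 1) f) (T : ℕ × ℕ → Prop), x = C.germAt K f hf ∧
      DeltaPred (n + 1) T ∧ ∀ g hg, C.germAt K g hg ∈ A ↔
        ∀ᶠ m in hyperfilter ℕ, T (C.gen K m, g (C.gen K m)) := by
  obtain ⟨p, φ, w, hφ, hA⟩ := hA
  obtain ⟨K, -, f, hf, hxw⟩ := exists_eq_germAt (Sum.elim (fun _ : Fin 1 => x) w) 0
  let F : Fin 1 ⊕ Fin p → ℕ × ℕ → ℕ := Sum.elim (fun _ => Prod.snd) fun i z => f (.inr i) z.1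
  let G : Fin 0 → ℕ × ℕ → ℕ := finZeroElim
  refine ⟨K, _, hf (.inl 0), fun z => RealizeNat φ (fun a => F a z) fun i => G i z,
    congrFun hxw (.inl 0), ?_, fun g hg => (hA fun _ => C.germAt K g hg).trans ?_⟩
  · exact hφ.isDeltaFm le_rfl (ℕ × ℕ) F G (Sum.rec (fun _ => .snd) fun i => (hf _).comp .fst)
      fun i => i.elim0
  · exact (hφ.satisfiesLos le_rfl).realize_iff_eventually (f := fun a x => F a (x, g x))
      (g := fun i x => G i (x, g x))
      (Sum.rec (fun _ => rfl) fun i => congrArg C.incl (congrFun hxw (.inr i))) fun i => i.elim0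

theorem isig_model (C : GenericTower n) : ISig n C.Model := by
  intro A hA h0 hsucc x
  obtain ⟨K, f, hf, T, rfl, hT, hmem⟩ := exists_deltaPred_of_sigmaDef1 hA x
  by_contra hx
  obtain ⟨t, ht, hmin⟩ := (hT.not.or (.eq .snd (hf.comp .fst))).exists_isLeast
    fun z => ⟨f z, Or.inr rfl⟩
  have ht_notMem : ∀ᶠ m in hyperfilter ℕ, ¬ T (C.gen K m, t (C.gen K m)) := by
    rw [hmem, ← Ultrafilter.eventually_not] at hx
    refine hx.mono fun m hm => (hmin (C.gen K m)).1.elim id fun heq => ?_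
    rwa [show t (C.gen K m) = f (C.gen K m) from heq]
  have ht_pos : ∀ᶠ m in hyperfilter ℕ, 0 < t (C.gen K m) := by
    rw [zero_eq_germAt K, hmem] at h0
    filter_upwards [h0, ht_notMem] with m hm hm'
    exact Nat.pos_of_ne_zero fun h => hm' (h ▸ hm)
  have hpred_mem : C.germAt K (fun z => t z - 1) (ht.sub (.const 1)) ∈ A := by
    refine (hmem _ _).2 (ht_pos.mono fun m hm => ?_)
    by_contra hne
    exact (Nat.sub_lt hm one_pos).not_ge ((hmin (C.gen K m)).2 (Or.inl hne))
  have hsucc_eq : C.germAt K (fun z => t z - 1) (ht.sub (.const 1)) + 1 = C.germAt K t ht := by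
    rw [one_eq_germAt K, germAt_add, germAt_eq_germAt]
    exact ht_pos.mono fun m hm => Nat.sub_add_cancel hm
  exact Ultrafilter.eventually_not.1 ht_notMem ((hmem t ht).1 (hsucc_eq ▸ hsucc _ hpred_mem))

end GenericTower

end ModelArithmetic

section Reflection

open Filter

variable {n : ℕ} {C : GenericTower n}

namespace GenericTower

theorem exists_forall_lt_incl_mem_level (a : C.Model) :
    ∃ k, ∀ K ≥ k, ∀ d < a, C.incl d ∈ C.level K := by
  obtain ⟨K₀, -, f, hf, ha⟩ := exists_incl_eq_germ (fun _ : Unit => a) 0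
  obtain ⟨k, hk⟩ := C.exists_comp_gen_le_bound (K := K₀) (hf ())
  refine ⟨k, fun K hK d hd => ?_⟩
  obtain ⟨L, hL, g, hg, hdg⟩ := exists_incl_eq_germ (fun _ : Unit => d) K
  obtain ⟨g', hg', hcollapse⟩ := C.exists_collapse hL (hg ())
  have hlt : ∀ᶠ m in hyperfilter ℕ, g () (C.gen L m) < f () (C.gen K₀ m) := by
    rw [← germ_lt_germ, ← ha, ← hdg]
    exact hd
  refine ⟨g', hg', (hdg ()).trans (germ_eq_germ.2 ?_)⟩
  filter_upwards [hlt, Nat.hyperfilter_le_atTop hcollapse] with m hm hm'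
  exact hm' (hm.le.trans ((hk m).trans (C.bound_mono hK m)))

theorem exists_incl_notMem_level (C : GenericTower n) (k : ℕ) :
    ∃ x : C.Model, C.incl x ∉ C.level k := by
  refine ⟨C.germAt (k + 1) (fun z => z.unpair.2) (DeltaFun.unpair_snd DeltaFun.id), ?_⟩
  rintro ⟨g, hg, h⟩
  have hfresh := Nat.hyperfilter_le_atTop (C.fresh k g hg)
  exact Ultrafilter.eventually_not.1 hfresh (germ_eq_germ.1 h)

theorem exists_deltaFun_reflection {σ : ℕ × ℕ → Prop} (hσ : DeltaPred (n + 1) σ) {k K : ℕ}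
    (h : ∀ᶠ m in hyperfilter ℕ, σ (C.gen k m, C.gen K m)) :
    ∃ t, DeltaFun (n + 1) t ∧ ∀ᶠ m in hyperfilter ℕ, σ (C.gen k m, t (C.gen k m)) := by
  obtain ⟨b, hb, hgen⟩ := C.exists_le_comp_gen_zero (K := K) DeltaFun.id
  obtain ⟨B, hB, hbB⟩ := C.exists_lift k.zero_le hb
  simp only [C.gen_zero] at hbB
  obtain ⟨t, ht, hmin⟩ := (hσ.or (.lt (hB.comp .fst) .snd)).exists_isLeast
    fun z => ⟨B z + 1, Or.inr (Nat.lt_succ_self _)⟩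
  refine ⟨t, ht, h.mono fun m hm => (hmin (C.gen k m)).1.resolve_right fun hlt => ?_⟩
  exact hlt.not_ge (((hmin (C.gen k m)).2 (Or.inl hm)).trans ((hgen m).trans (hbB m).le))

/-- A satisfying assignment of `φ` can be moved into level `k`, keeping the values of the free
variables that lie there already. -/
def ReflectsTo (C : GenericTower n) (k : ℕ) {α : Type} {l : ℕ} (φ : lang.BoundedFormula α l) :
    Prop :=
  ∀ v xs, φ.Realize (M := C.Model) v xs → ∃ v' xs', φ.Realize (M := C.Model) v' xs' ∧
    ∀ a, C.incl (v' a) ∈ C.level k ∧ (C.incl (v a) ∈ C.level k → v' a = v a)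

variable {α : Type} [Finite α] {l k : ℕ}

theorem SatisfiesLos.reflectsTo {φ : lang.BoundedFormula α l} (h : C.SatisfiesLos φ)
    (hφ : IsDeltaFm n φ) : C.ReflectsTo k φ := by
  intro v xs H
  obtain ⟨K, -, f, hf, hfv⟩ := exists_incl_eq_germ (Sum.elim v xs) k
  have hlevel : ∀ a, ∃ g, DeltaFun (n + 1) g ∧
      (C.incl (v a) ∈ C.level k → C.incl (v a) = germ fun m => g (C.gen k m)) := fun a => by
    by_cases ha : C.incl (v a) ∈ C.level k
    · exact ha.imp fun g hg => ⟨hg.1, fun _ => hg.2⟩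
    · exact ⟨_, .id, fun h => (ha h).elim⟩
  choose g hg hgv using hlevel
  have hσ : DeltaPred (n + 1) fun z : ℕ × ℕ =>
      RealizeNat φ (fun a => f (.inl a) z.2) (fun i => f (.inr i) z.2) ∧
        ∀ a, C.incl (v a) ∈ C.level k → f (.inl a) z.2 = g a z.1 :=
    (hφ _ _ _ (fun a => (hf (.inl a)).comp .snd) fun i => (hf (.inr i)).comp .snd).and
      (.forall_finite fun a => (DeltaPred.const _).imp
        (.eq ((hf _).comp .snd) ((hg a).comp .fst)))
  obtain ⟨t, ht, htσ⟩ := exists_deltaFun_reflection hσ (K := K) <|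
    ((h.realize_iff_eventually (fun a => hfv (.inl a)) fun i => hfv (.inr i)).1 H).and <|
      eventually_all.2 fun a => eventually_imp_distrib_left.2 fun ha =>
        germ_eq_germ.1 ((hfv (.inl a)).symm.trans (hgv a ha))
  refine ⟨fun a => C.germAt k _ ((hf (.inl a)).comp ht),
    fun i => C.germAt k _ ((hf (.inr i)).comp ht),
    (h.realize_iff_eventually (f := fun a x => f (.inl a) (t x)) (g := fun i x => f (.inr i) (t x))
      (fun _ => rfl) fun _ => rfl).2 (htσ.mono fun m hm => hm.1),
    fun a => ⟨⟨_, (hf (.inl a)).comp ht, rfl⟩, fun ha => C.incl.injective ?_⟩⟩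
  exact (germ_eq_germ.2 (htσ.mono fun m hm => hm.2 a ha)).trans (hgv a ha).symm

end GenericTower

theorem SigmaFm.succ_induction {α : Type} [Finite α] {p : ∀ l, lang.BoundedFormula α l → Prop}
    (base : ∀ l φ, C.SatisfiesLos φ → IsDeltaFm n φ → p l φ)
    (ex : ∀ l φ, SigmaFm (n + 1) (l + 1) φ → p (l + 1) φ → p l φ.ex)
    {l : ℕ} {φ : lang.BoundedFormula α l} (h : SigmaFm (n + 1) l φ) : p l φ :=
  match h with
  | .delta0 _ _ h => base _ _ h.satisfiesLos (SigmaFm.isDeltaFm (.delta0 0 _ h) n.zero_le)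
  | .ofPi _ _ h => base _ _ (h.satisfiesLos le_rfl) (h.isDeltaFm le_rfl)
  | .ex _ _ h => ex _ _ h (h.succ_induction base ex)

variable {α : Type} [Finite α] {l : ℕ} {φ : lang.BoundedFormula α l}

theorem SigmaFm.reflectsTo (h : SigmaFm (n + 1) l φ) (k : ℕ) : C.ReflectsTo k φ := by
  refine h.succ_induction (C := C) (p := fun l φ => C.ReflectsTo k φ)
    (fun _ _ hlos hΔ => hlos.reflectsTo hΔ) fun l φ _ ih v xs H => ?_
  obtain ⟨y, hy⟩ := BoundedFormula.realize_ex.1 H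
  obtain ⟨v', xs', H', hv'⟩ := ih _ _ hy
  refine ⟨v', Fin.init xs', BoundedFormula.realize_ex.2 ⟨xs' (Fin.last l), ?_⟩, hv'⟩
  rwa [Fin.snoc_init_self]

theorem GenericTower.card_model (C : GenericTower n) : CARD C.Model (n + 1) := by
  rintro F ⟨p, φ, w, hφ, hF⟩ a hFa
  obtain ⟨k₀, hk₀⟩ := exists_forall_lt_incl_mem_level a
  obtain ⟨k, hk, f, hf, hw⟩ := exists_incl_eq_germ w k₀
  obtain ⟨x, hx⟩ := C.exists_incl_notMem_level k
  obtain ⟨d, hda, hxd⟩ := hFa x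
  obtain ⟨v', xs', H, hv'⟩ := hφ.reflectsTo k _ _ ((hF ![x, d]).1 hxd)
  have hd : v' (.inl 1) = d := (hv' (.inl 1)).2 (hk₀ k hk d hda)
  have hparam : ∀ i, v' (.inr i) = w i := fun i => (hv' (.inr i)).2 ⟨f i, hf i, hw i⟩
  refine ⟨x, v' (.inl 0), d, fun h => hx (h ▸ (hv' (.inl 0)).1), hda, hxd, ?_⟩
  refine (hF ![v' (.inl 0), d]).2 ?_
  convert H
  funext i
  rcases i with i | i
  · fin_cases i
    exacts [rfl, hd.symm]
  · exact (hparam i).symm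

theorem SigmaFm.realize_incl (h : SigmaFm (n + 1) l φ) {v : α → C.Model} {xs : Fin l → C.Model}
    (H : φ.Realize v xs) : φ.Realize (C.incl ∘ v) (C.incl ∘ xs) := by
  refine h.succ_induction (C := C) (p := fun l φ => ∀ xs : Fin l → C.Model, φ.Realize v xs →
    φ.Realize (C.incl ∘ v) (C.incl ∘ xs)) (fun _ _ hlos _ xs => (hlos v xs).1)
    (fun l φ _ ih xs H => ?_) xs H
  obtain ⟨y, hy⟩ := BoundedFormula.realize_ex.1 H
  exact BoundedFormula.realize_ex.2
    ⟨C.incl y, (GenericTower.realize_incl_snoc φ v xs y).2 (ih _ hy)⟩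

theorem SigmaFm.realize_of_forall (h : SigmaFm (n + 1) l φ) {D : ℕ → Prop}
    (hD : DeltaPred (n + 1) D) {k : ℕ} (hDk : ∀ᶠ m in hyperfilter ℕ, D (C.gen k m))
    {v : α → C.Model} {f : α → ℕ → ℕ} (hf : ∀ a, DeltaFun (n + 1) (f a))
    (hv : ∀ a, C.incl (v a) = germ fun m => f a (C.gen k m))
    {xs : Fin l → C.Model} {g : Fin l → ℕ → ℕ} (hg : ∀ i, DeltaFun (n + 1) (g i))
    (hxs : ∀ i, C.incl (xs i) = germ fun m => g i (C.gen k m))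
    (H : ∀ x, D x → RealizeNat φ (fun a => f a x) fun i => g i x) : φ.Realize v xs := by
  refine h.succ_induction (C := C) (p := fun l φ => ∀ (xs : Fin l → C.Model) (g : Fin l → ℕ → ℕ),
    (∀ i, DeltaFun (n + 1) (g i)) → (∀ i, C.incl (xs i) = germ fun m => g i (C.gen k m)) →
    (∀ x, D x → RealizeNat φ (fun a => f a x) fun i => g i x) → φ.Realize v xs)
    (fun _ _ hlos _ xs g _ hxs H => ?_) (fun l φ hφ ih xs g hg hxs H => ?_) xs g hg hxs H
  · exact (hlos.realize_iff_eventually hv hxs).2 (hDk.mono fun m => H _)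
  · have hR : SigmaPred (n + 1) fun z : ℕ × ℕ => ¬ D z.1 ∨
        RealizeNat φ (fun a => f a z.1) (Fin.snoc (fun i => g i z.1) z.2 : Fin (l + 1) → ℕ) :=
      (hD.2.comp Primrec.fst).or (hφ.sigmaPred_succ (fun a => (hf a).comp .fst)
        (DeltaFun.snoc (fun i => (hg i).comp .fst) .snd))
    obtain ⟨s, hs, hsR⟩ := hR.uniformization fun x => by
      by_cases hx : D x
      · exact ((realizeNat_ex _ _ φ).1 (H x hx)).imp fun _ => Or.inr
      · exact ⟨0, Or.inl hx⟩
    refine BoundedFormula.realize_ex.2 ⟨C.germAt k s hs, ih _ (fun i x => (Fin.snoc (fun j => g j x)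
      (s x) : Fin (_ + 1) → ℕ) i) (DeltaFun.snoc hg hs) (Fin.lastCases ?_ fun i => ?_)
      fun x hx => (hsR x).resolve_left (not_not_intro hx)⟩
    · simp only [Fin.snoc_last]
      rfl
    · simpa only [Fin.snoc_castSucc] using hxs i

end Reflection

section Arithmetization

variable {ι κ : Type}

/-- Functions on `ℕ` given by a term in the variables `ι`. -/
def IsTermFun (f : (ι → ℕ) → ℕ) : Prop := ∃ t : lang.Term ι, ∀ v, f v = evalNat t v

namespace IsTermFun

variable {f g : (ι → ℕ) → ℕ}

theorem var (i : ι) : IsTermFun fun v : ι → ℕ => v i := ⟨Term.var i, fun _ => rfl⟩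

theorem zero : IsTermFun fun _ : ι → ℕ => 0 :=
  ⟨Term.func (L := lang) (l := 0) Func.zero ![], fun _ => rfl⟩

theorem one : IsTermFun fun _ : ι → ℕ => 1 :=
  ⟨Term.func (L := lang) (l := 0) Func.one ![], fun _ => rfl⟩

theorem add (hf : IsTermFun f) (hg : IsTermFun g) : IsTermFun fun v => f v + g v := by
  obtain ⟨t, ht⟩ := hf
  obtain ⟨u, hu⟩ := hg
  exact ⟨Term.func (L := lang) (l := 2) Func.add ![t, u], fun v => congrArg₂ _ (ht v) (hu v)⟩

theorem mul (hf : IsTermFun f) (hg : IsTermFun g) : IsTermFun fun v => f v * g v := by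
  obtain ⟨t, ht⟩ := hf
  obtain ⟨u, hu⟩ := hg
  exact ⟨Term.func (L := lang) (l := 2) Func.mul ![t, u], fun v => congrArg₂ _ (ht v) (hu v)⟩

theorem succ (hf : IsTermFun f) : IsTermFun fun v => f v + 1 := hf.add one

theorem comp_some (hf : IsTermFun f) :
    IsTermFun fun w : Option ι → ℕ => f fun i => w (some i) := by
  obtain ⟨t, ht⟩ := hf
  exact ⟨t.relabel some, fun w => (ht _).trans (Term.realize_relabel (M := StdNat)).symm⟩

theorem exists_evalNat_eq (hf : IsTermFun f) {β : Type} (t : ι → lang.Term β) :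
    ∃ u : lang.Term β, ∀ c, evalNat u c = f fun i => evalNat (t i) c := by
  obtain ⟨s, hs⟩ := hf
  exact ⟨s.subst t, fun c => (Term.realize_subst (M := StdNat)).trans (hs _).symm⟩

end IsTermFun

/-- Relations on `ℕ` definable by a formula of the class `Γ`, with arbitrary terms in place of the
variables. Building in the substitution makes the class closed under it, although no syntactic
operation on formulas is available. -/
def IsDefBy (Γ : ∀ {α : Type} (l : ℕ), lang.BoundedFormula α l → Prop) (R : (ι → ℕ) → Prop) :
    Prop :=
  ∀ (α : Type) (l : ℕ) (t : ι → lang.Term (α ⊕ Fin l)), ∃ φ : lang.BoundedFormula α l,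
    Γ l φ ∧ ∀ v xs, RealizeNat φ v xs ↔ R fun i => evalNat (t i) (Sum.elim v xs)

namespace IsDefBy

variable {Γ : ∀ {α : Type} (l : ℕ), lang.BoundedFormula α l → Prop} {R S : (ι → ℕ) → Prop}

theorem of_iff (hR : IsDefBy Γ R) (h : ∀ v, S v ↔ R v) : IsDefBy Γ S :=
  (funext fun v => propext (h v) : S = R) ▸ hR

theorem subst {R : (κ → ℕ) → Prop} (hR : IsDefBy Γ R) {f : κ → (ι → ℕ) → ℕ}
    (hf : ∀ j, IsTermFun (f j)) : IsDefBy Γ fun v => R fun j => f j v := by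
  intro α l t
  choose u hu using fun j => (hf j).exists_evalNat_eq t
  obtain ⟨φ, hφ, hφR⟩ := hR α l u
  exact ⟨φ, hφ, fun v xs => by simp only [hφR, hu]⟩

theorem exists_realizeNat_snoc {R : ℕ → (ι → ℕ) → Prop}
    (hR : IsDefBy Γ fun w : Option ι → ℕ => R (w none) fun i => w (some i)) {α : Type} {l : ℕ}
    (t : ι → lang.Term (α ⊕ Fin l)) :
    ∃ φ : lang.BoundedFormula α (l + 1), Γ (l + 1) φ ∧ ∀ v xs y,
      RealizeNat φ v (Fin.snoc xs y) ↔ R y fun i => evalNat (t i) (Sum.elim v xs) := by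
  obtain ⟨φ, hφ, hφR⟩ := hR α (l + 1) fun j =>
    j.elim (Term.var (Sum.inr (Fin.last l))) fun i => (t i).liftAt 1 l
  refine ⟨φ, hφ, fun v xs y => (hφR v _).trans (Iff.of_eq (congrArg₂ R ?_ (funext fun i => ?_)))⟩
  · exact Fin.snoc_last (α := fun _ => ℕ) y xs
  · exact realize_liftAt_one_snoc (M := StdNat) (t i) v xs y

end IsDefBy

/-- Relations on `ℕ` definable by a bounded formula. -/
def IsDelta0Rel (R : (ι → ℕ) → Prop) : Prop := IsDefBy (fun {_} l φ => IsDelta0 l φ) R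

namespace IsDelta0Rel

variable {R S : (ι → ℕ) → Prop} {f g : (ι → ℕ) → ℕ}

theorem eq (hf : IsTermFun f) (hg : IsTermFun g) : IsDelta0Rel fun v => f v = g v := by
  intro α l t
  obtain ⟨s, hs⟩ := hf.exists_evalNat_eq t
  obtain ⟨u, hu⟩ := hg.exists_evalNat_eq t
  exact ⟨_, .equal l s u, fun v xs => Eq.congr (hs _) (hu _)⟩

theorem lt (hf : IsTermFun f) (hg : IsTermFun g) : IsDelta0Rel fun v => f v < g v := by
  intro α l t
  obtain ⟨s, hs⟩ := hf.exists_evalNat_eq t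
  obtain ⟨u, hu⟩ := hg.exists_evalNat_eq t
  exact ⟨_, .rel l 2 Rel.lt ![s, u], fun v xs => Iff.of_eq (congrArg₂ (· < ·) (hs _) (hu _))⟩

theorem imp (hR : IsDelta0Rel R) (hS : IsDelta0Rel S) : IsDelta0Rel fun v => R v → S v := by
  intro α l t
  obtain ⟨φ, hφ, hφR⟩ := hR α l t
  obtain ⟨ψ, hψ, hψS⟩ := hS α l t
  exact ⟨_, .imp l hφ hψ, fun v xs => imp_congr (hφR v xs) (hψS v xs)⟩

theorem not (hR : IsDelta0Rel R) : IsDelta0Rel fun v => ¬ R v :=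
  hR.imp fun _ l _ => ⟨_, .falsum l, fun _ _ => Iff.rfl⟩

theorem and (hR : IsDelta0Rel R) (hS : IsDelta0Rel S) : IsDelta0Rel fun v => R v ∧ S v :=
  (hR.imp hS.not).not.of_iff fun _ => by simp

variable {T : ℕ → (ι → ℕ) → Prop}

theorem ball (hT : IsDelta0Rel fun w : Option ι → ℕ => T (w none) fun i => w (some i))
    (hf : IsTermFun f) : IsDelta0Rel fun v => ∀ y < f v, T y v := by
  intro α l t
  obtain ⟨u, hu⟩ := hf.exists_evalNat_eq t
  obtain ⟨φ, hφ, hφT⟩ := hT.exists_realizeNat_snoc t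
  refine ⟨_, .bdAll l u hφ, fun v xs => ?_⟩
  rw [realizeNat_bdAll, hu]
  exact forall₂_congr fun y _ => hφT v xs y

theorem bex (hT : IsDelta0Rel fun w : Option ι → ℕ => T (w none) fun i => w (some i))
    (hf : IsTermFun f) : IsDelta0Rel fun v => ∃ y < f v, T y v :=
  (IsDelta0Rel.not (ball (T := fun y v => ¬ T y v) hT.not hf)).of_iff fun _ => by simp

end IsDelta0Rel

/-- Relations `∃ u, A u v` with `A` bounded. Requiring `A` to be monotone in the witness `u` makes
finitely many witnesses replaceable by their maximum. -/
def IsSigma1Rel (R : (ι → ℕ) → Prop) : Prop :=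
  ∃ A : ℕ → (ι → ℕ) → Prop, Monotone A ∧
    (IsDelta0Rel fun w : Option ι → ℕ => A (w none) fun i => w (some i)) ∧ ∀ v, R v ↔ ∃ u, A u v

namespace IsSigma1Rel

variable {R S : (ι → ℕ) → Prop}

theorem of_iff (hR : IsSigma1Rel R) (h : ∀ v, S v ↔ R v) : IsSigma1Rel S :=
  (funext fun v => propext (h v) : S = R) ▸ hR

theorem of_isDelta0Rel (hR : IsDelta0Rel R) : IsSigma1Rel R :=
  ⟨fun _ => R, monotone_const, hR.subst fun i => .var (some i), fun _ => (exists_const ℕ).symm⟩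

theorem subst {R : (κ → ℕ) → Prop} (hR : IsSigma1Rel R) {f : κ → (ι → ℕ) → ℕ}
    (hf : ∀ j, IsTermFun (f j)) : IsSigma1Rel fun v => R fun j => f j v := by
  obtain ⟨A, hA, hA₀, hRA⟩ := hR
  refine ⟨fun u v => A u fun j => f j v, fun _ _ h v => hA h _, ?_, fun v => hRA _⟩
  exact hA₀.subst
    (f := fun j (w : Option ι → ℕ) => j.elim (w none) fun j => f j fun i => w (some i))
    (Option.rec (.var none) fun j => (hf j).comp_some)

theorem and (hR : IsSigma1Rel R) (hS : IsSigma1Rel S) : IsSigma1Rel fun v => R v ∧ S v := by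
  obtain ⟨A, hA, hA₀, hRA⟩ := hR
  obtain ⟨B, hB, hB₀, hSB⟩ := hS
  refine ⟨fun u v => A u v ∧ B u v, fun _ _ h v => And.imp (hA h v) (hB h v), hA₀.and hB₀,
    fun v => (and_congr (hRA v) (hSB v)).trans ?_⟩
  exact exists_and_iff_of_monotone (fun _ _ h => hA h v) fun _ _ h => hB h v

variable {T : ℕ → (ι → ℕ) → Prop}

theorem exists_witness
    (hT : IsSigma1Rel fun w : Option ι → ℕ => T (w none) fun i => w (some i)) :
    ∃ A : ℕ → ℕ → (ι → ℕ) → Prop, (∀ y v, Monotone fun u => A u y v) ∧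
      (IsDelta0Rel fun w : Option (Option ι) → ℕ =>
        A (w (some none)) (w none) fun i => w (some (some i))) ∧
      ∀ y v, T y v ↔ ∃ u, A u y v := by
  obtain ⟨A, hA, hA₀, hTA⟩ := hT
  refine ⟨fun u y v => A u fun j => j.elim y v, fun y v _ _ h => hA h _, ?_,
    fun y v => hTA fun j => j.elim y v⟩
  refine (hA₀.subst (f := fun j (w : Option (Option ι) → ℕ) =>
    j.elim (w (some none)) fun j => j.elim (w none) fun i => w (some (some i))) ?_).of_iff ?_
  · exact Option.rec (.var _) (Option.rec (.var _) fun _ => .var _)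
  · exact fun w => Iff.of_eq (congrArg (A _) (funext (Option.rec rfl fun _ => rfl)))

theorem exists_nat (hT : IsSigma1Rel fun w : Option ι → ℕ => T (w none) fun i => w (some i)) :
    IsSigma1Rel fun v => ∃ y, T y v := by
  obtain ⟨A, hA, hA₀, hTA⟩ := hT.exists_witness
  refine ⟨fun u v => ∃ y < u, A u y v, ?_, ?_, fun v => ⟨?_, ?_⟩⟩
  · exact fun _ _ h v ⟨y, hy, hyA⟩ => ⟨y, hy.trans_le h, hA y v h hyA⟩
  · exact .bex (T := fun y w => A (w none) y fun i => w (some i)) hA₀ (.var none)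
  · rintro ⟨y, hy⟩
    obtain ⟨u, hu⟩ := (hTA y v).1 hy
    exact ⟨max u (y + 1), y, le_max_right u (y + 1), hA y v (le_max_left _ _) hu⟩
  · rintro ⟨u, y, -, hu⟩
    exact ⟨y, (hTA y v).2 ⟨u, hu⟩⟩

theorem ball (hT : IsSigma1Rel fun w : Option ι → ℕ => T (w none) fun i => w (some i))
    {f : (ι → ℕ) → ℕ} (hf : IsTermFun f) : IsSigma1Rel fun v => ∀ y < f v, T y v := by
  obtain ⟨A, hA, hA₀, hTA⟩ := hT.exists_witness
  refine ⟨fun u v => ∀ y < f v, A u y v, ?_, ?_, fun v => ⟨fun h => ?_, ?_⟩⟩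
  · exact fun _ _ h v H y hy => hA y v h (H y hy)
  · exact .ball (T := fun y w => A (w none) y fun i => w (some i)) hA₀ hf.comp_some
  · choose! u hu using fun y hy => (hTA y v).1 (h y hy)
    exact ⟨(Finset.range (f v)).sup u, fun y hy =>
      hA y v (Finset.le_sup (Finset.mem_range.2 hy)) (hu y hy)⟩
  · exact fun ⟨u, hu⟩ y hy => (hTA y v).2 ⟨u, hu y hy⟩

end IsSigma1Rel

/-- Functions with a graph of the form `IsSigma1Rel`, the value being the coordinate `none`. -/
def IsSigma1Fun (f : (ι → ℕ) → ℕ) : Prop :=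
  IsSigma1Rel fun w : Option ι → ℕ => w none = f fun i => w (some i)

namespace IsSigma1Fun

variable {f g : (ι → ℕ) → ℕ}

theorem of_isTermFun (hf : IsTermFun f) : IsSigma1Fun f :=
  .of_isDelta0Rel (.eq (.var none) hf.comp_some)

theorem subst {f : (κ → ℕ) → ℕ} (hf : IsSigma1Fun f) {g : κ → (ι → ℕ) → ℕ}
    (hg : ∀ j, IsTermFun (g j)) : IsSigma1Fun fun v => f fun j => g j v :=
  IsSigma1Rel.subst hf (f := fun j (w : Option ι → ℕ) =>
    j.elim (w none) fun j => g j fun i => w (some i))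
    (Option.rec (.var _) fun j => (hg j).comp_some)

theorem comp_some (hf : IsSigma1Fun f) :
    IsSigma1Fun fun w : Option ι → ℕ => f fun i => w (some i) :=
  hf.subst fun i => .var (some i)

theorem rel_comp {T : ℕ → (ι → ℕ) → Prop} (hf : IsSigma1Fun f)
    (hT : IsSigma1Rel fun w : Option ι → ℕ => T (w none) fun i => w (some i)) :
    IsSigma1Rel fun v => T (f v) v :=
  (IsSigma1Rel.exists_nat (T := fun y v => y = f v ∧ T y v) (hf.and hT)).of_iff fun _ => by simp

theorem eq (hf : IsSigma1Fun f) (hg : IsSigma1Fun g) : IsSigma1Rel fun v => f v = g v :=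
  hf.rel_comp (T := fun y v => y = g v) hg

theorem rel_comp_tuple {k : ℕ} {T : (Fin k → ℕ) → (ι → ℕ) → Prop} {f : Fin k → (ι → ℕ) → ℕ}
    (hf : ∀ i, IsSigma1Fun (f i))
    (hT : IsSigma1Rel fun w : Fin k ⊕ ι → ℕ => T (fun i => w (.inl i)) fun i => w (.inr i)) :
    IsSigma1Rel fun v => T (fun i => f i v) v := by
  induction k generalizing ι with
  | zero =>
    exact (hT.subst (f := fun j (v : ι → ℕ) => j.elim Fin.elim0 v)
      (Sum.rec (fun i => i.elim0) fun i => .var i)).of_iff fun v =>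
        Iff.of_eq (congrArg (T · v) (Subsingleton.elim _ _))
  | succ k ih =>
    refine ((hf 0).rel_comp (T := fun y v => T (Fin.cons y fun i => f i.succ v) v)
      (ih (T := fun ys (w : Option ι → ℕ) => T (Fin.cons (w none) ys) fun i => w (some i))
        (fun i => (hf i.succ).comp_some) ?_)).of_iff fun v => ?_
    · refine (hT.subst (f := fun j (w : Fin k ⊕ Option ι → ℕ) =>
        j.elim (fun i => (Fin.cons (w (.inr none)) fun i => w (.inl i) : Fin (k + 1) → ℕ) i)
          fun i => w (.inr (some i))) (Sum.rec ?_ fun _ => .var _)).of_iff fun w => Iff.rfl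
      exact Fin.cases (.var _) fun _ => .var _
    · exact Iff.of_eq (congrArg (T · v) (funext (Fin.cases rfl fun _ => rfl)))

theorem comp {k : ℕ} {g : (Fin k → ℕ) → ℕ} {f : Fin k → (ι → ℕ) → ℕ} (hg : IsSigma1Fun g)
    (hf : ∀ i, IsSigma1Fun (f i)) : IsSigma1Fun fun v => g fun i => f i v :=
  rel_comp_tuple (T := fun ys (w : Option ι → ℕ) => w none = g ys) (fun i => (hf i).comp_some)
    (IsSigma1Fun.eq (.of_isTermFun (.var _)) (hg.subst fun _ => .var _))

theorem mod_succ (hf : IsTermFun f) (hg : IsTermFun g) : IsSigma1Fun fun v => f v % (g v + 1) := by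
  refine .of_isDelta0Rel (((IsDelta0Rel.lt (.var none) hg.comp_some.succ).and
    (.bex (T := fun q w => f (fun i => w (some i)) = (g (fun i => w (some i)) + 1) * q + w none)
      (.eq hf.comp_some.comp_some ((hg.comp_some.comp_some.succ.mul (.var none)).add
        (.var (some none)))) hf.comp_some.succ)).of_iff fun w => ⟨fun h => ?_, ?_⟩)
  · rw [h]
    exact ⟨Nat.mod_lt _ (Nat.succ_pos _), _, Nat.lt_succ_of_le (Nat.div_le_self _ _),
      (Nat.div_add_mod _ _).symm⟩
  · rintro ⟨hlt, q, -, hq⟩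
    simpa only [hq, Nat.mul_add_mod] using (Nat.mod_eq_of_lt hlt).symm

theorem beta {s t i : (ι → ℕ) → ℕ} (hs : IsTermFun s) (ht : IsTermFun t) (hi : IsTermFun i) :
    IsSigma1Fun fun v => (Nat.pair (s v) (t v)).beta (i v) := by
  simpa [Nat.beta] using mod_succ hs (hi.succ.mul ht)

end IsSigma1Fun

theorem eq_natRec_iff_exists_beta {a b c : ℕ} {g : ℕ → ℕ → ℕ} :
    c = Nat.rec a g b ↔ ∃ s t, (Nat.pair s t).beta 0 = a ∧ (Nat.pair s t).beta b = c ∧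
      ∀ i < b, (Nat.pair s t).beta (i + 1) = g i ((Nat.pair s t).beta i) := by
  constructor
  · rintro rfl
    let l : List ℕ := List.ofFn fun i : Fin (b + 1) => Nat.rec a g i
    have hl (i : ℕ) (hi : i ≤ b) : (Nat.unbeta l).beta i = Nat.rec a g i := by
      have hi' : i < l.length := by simpa only [l, List.length_ofFn] using Nat.lt_succ_of_le hi
      exact (Nat.beta_unbeta_coe l ⟨i, hi'⟩).trans (List.getElem_ofFn hi')
    refine ⟨(Nat.unbeta l).unpair.1, (Nat.unbeta l).unpair.2, ?_⟩
    rw [Nat.pair_unpair]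
    refine ⟨hl 0 b.zero_le, hl b le_rfl, fun i hi => ?_⟩
    rw [hl _ hi, hl _ hi.le]
  · rintro ⟨s, t, h₀, rfl, h⟩
    suffices ∀ i ≤ b, (Nat.pair s t).beta i = Nat.rec a g i from this b le_rfl
    intro i hi
    induction i with
    | zero => exact h₀
    | succ i ih => rw [h i hi, ih (by omega)]

namespace IsSigma1Fun

theorem eq_natRec {f c h : (ι → ℕ) → ℕ} {g : ℕ → ℕ → (ι → ℕ) → ℕ} (hf : IsSigma1Fun f)
    (hg : IsSigma1Fun fun w : Option (Option ι) → ℕ =>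
      g (w (some none)) (w none) fun i => w (some (some i)))
    (hc : IsTermFun c) (hh : IsTermFun h) :
    IsSigma1Rel fun v => c v = Nat.rec (f v) (fun i y => g i y v) (h v) := by
  refine IsSigma1Rel.of_iff (.exists_nat (T := fun s v => ∃ t, (Nat.pair s t).beta 0 = f v ∧
    (Nat.pair s t).beta (h v) = c v ∧
      ∀ i < h v, (Nat.pair s t).beta (i + 1) = g i ((Nat.pair s t).beta i) v)
    (.exists_nat (T := fun t w => (Nat.pair (w none) t).beta 0 = f (fun i => w (some i)) ∧
      (Nat.pair (w none) t).beta (h fun i => w (some i)) = c (fun i => w (some i)) ∧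
      ∀ i < h (fun i => w (some i)), (Nat.pair (w none) t).beta (i + 1) =
        g i ((Nat.pair (w none) t).beta i) fun i => w (some i)) ?_))
    fun v => eq_natRec_iff_exists_beta
  have hs : IsTermFun fun w : Option (Option ι) → ℕ => w (some none) := .var _
  have ht : IsTermFun fun w : Option (Option ι) → ℕ => w none := .var _
  refine (eq (beta hs ht .zero) hf.comp_some.comp_some).and
    ((eq (beta hs ht hh.comp_some.comp_some)
      (of_isTermFun hc.comp_some.comp_some)).and (.ball (T := fun i w =>
        (Nat.pair (w (some none)) (w none)).beta (i + 1) =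
          g i ((Nat.pair (w (some none)) (w none)).beta i) fun i => w (some (some i))) ?_
        hh.comp_some.comp_some))
  refine eq (beta hs.comp_some ht.comp_some (IsTermFun.var _).succ) ?_
  exact rel_comp (T := fun y (w : Option (Option (Option (Option ι))) → ℕ) => w none =
      g (w (some none)) y fun i => w (some (some (some (some i)))))
    (beta hs.comp_some.comp_some ht.comp_some.comp_some (.var (some none)))
    (eq (of_isTermFun (.var (some none))) (hg.subst (g := fun j w => j.elim (w none) fun j =>
      j.elim (w (some (some none))) fun i => w (some (some (some (some (some i))))))
      (Option.rec (.var _) (Option.rec (.var _) fun _ => .var _))))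

theorem natRec {f h : (ι → ℕ) → ℕ} {g : ℕ → ℕ → (ι → ℕ) → ℕ} (hf : IsSigma1Fun f)
    (hg : IsSigma1Fun fun w : Option (Option ι) → ℕ =>
      g (w (some none)) (w none) fun i => w (some (some i)))
    (hh : IsTermFun h) : IsSigma1Fun fun v => Nat.rec (f v) (fun i y => g i y v) (h v) :=
  eq_natRec hf.comp_some (g := fun i y w => g i y fun i => w (some i))
    (hg.subst (g := fun j w => j.elim (w none) fun j => j.elim (w (some none)) fun i =>
      w (some (some (some i)))) (Option.rec (.var _) (Option.rec (.var _) fun _ => .var _)))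
    (.var none) hh.comp_some

theorem of_primrec' {k : ℕ} {f : List.Vector ℕ k → ℕ} (hf : Nat.Primrec' f) :
    IsSigma1Fun fun v : Fin k → ℕ => f (List.Vector.ofFn v) := by
  induction hf with
  | zero => exact of_isTermFun .zero
  | succ => exact of_isTermFun (IsTermFun.var 0).succ
  | get i =>
    simp only [List.Vector.get_ofFn]
    exact of_isTermFun (.var i)
  | comp g _ _ ihf ihg => exact ihf.comp ihg
  | @prec k f g _ _ ihf ihg =>
    exact natRec (g := fun y z v => g (y ::ᵥ z ::ᵥ List.Vector.ofFn fun i : Fin k => v i.succ))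
      (ihf.subst fun i => .var i.succ)
      (ihg.subst (g := fun j w => (Fin.cons (w (some none)) (Fin.cons (w none) fun i =>
        w (some (some i.succ))) : Fin (k + 2) → ℕ) j)
        (Fin.cases (.var _) (Fin.cases (.var _) fun _ => .var _))) (.var 0)

end IsSigma1Fun

mutual

theorem SigmaFm.exists_piFm_not {α : Type} {m l : ℕ} {φ : lang.BoundedFormula α l}
    (h : SigmaFm m l φ) :
    ∃ ψ : lang.BoundedFormula α l, PiFm m l ψ ∧ ∀ v xs, RealizeNat ψ v xs ↔ ¬ RealizeNat φ v xs :=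
  match h with
  | .delta0 _ _ h => ⟨_, .delta0 _ _ (.imp _ h (.falsum _)), fun _ _ => Iff.rfl⟩
  | .ofPi _ _ h =>
    let ⟨_, hψ, H⟩ := h.exists_sigmaFm_not
    ⟨_, .ofSigma _ _ hψ, H⟩
  | .ex _ _ h =>
    let ⟨_, hψ, H⟩ := h.exists_piFm_not
    ⟨_, .all _ _ hψ, fun v xs => by simp only [realizeNat_all, realizeNat_ex, H, not_exists]⟩

theorem PiFm.exists_sigmaFm_not {α : Type} {m l : ℕ} {φ : lang.BoundedFormula α l}
    (h : PiFm m l φ) :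
    ∃ ψ : lang.BoundedFormula α l, SigmaFm m l ψ ∧
      ∀ v xs, RealizeNat ψ v xs ↔ ¬ RealizeNat φ v xs :=
  match h with
  | .delta0 _ _ h => ⟨_, .delta0 _ _ (.imp _ h (.falsum _)), fun _ _ => Iff.rfl⟩
  | .ofSigma _ _ h =>
    let ⟨_, hψ, H⟩ := h.exists_piFm_not
    ⟨_, .ofPi _ _ hψ, H⟩
  | .all _ _ h =>
    let ⟨_, hψ, H⟩ := h.exists_sigmaFm_not
    ⟨_, .ex _ _ hψ, fun v xs => by simp only [realizeNat_all, realizeNat_ex, H, not_forall]⟩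

end

/-- Relations on `ℕ` definable by a `Σ_m` formula. -/
def IsSigmaRel (m : ℕ) (R : (ι → ℕ) → Prop) : Prop := IsDefBy (fun {_} l φ => SigmaFm m l φ) R

theorem IsSigmaRel.exists_not {m : ℕ} {T : ℕ → (ι → ℕ) → Prop}
    (hT : IsSigmaRel m fun w : Option ι → ℕ => T (w none) fun i => w (some i)) :
    IsSigmaRel (m + 1) fun v => ∃ y, ¬ T y v := by
  intro α l t
  obtain ⟨φ, hφ, hφT⟩ := hT.exists_realizeNat_snoc t
  obtain ⟨ψ, hψ, hψφ⟩ := hφ.exists_piFm_not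
  exact ⟨ψ.ex, .ex m l (.ofPi m _ hψ), fun v xs => by simp only [realizeNat_ex, hψφ, hφT]⟩

theorem IsSigma1Rel.isSigmaRel {R : (ι → ℕ) → Prop} (hR : IsSigma1Rel R) : IsSigmaRel 1 R := by
  obtain ⟨A, -, hA₀, hRA⟩ := hR
  refine (IsSigmaRel.exists_not (m := 0) (T := fun u v => ¬ A u v) fun α l t => ?_).of_iff
    fun v => by simp only [hRA, not_not]
  obtain ⟨φ, hφ, hφA⟩ := hA₀.not α l t
  exact ⟨φ, .delta0 0 l hφ, hφA⟩

theorem SigmaPred.isSigmaRel {m k : ℕ} {P : List.Vector ℕ k → Prop} (hP : SigmaPred (m + 1) P) :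
    IsSigmaRel (m + 1) fun v : Fin k → ℕ => P (List.Vector.ofFn v) := by
  induction m generalizing k with
  | zero =>
    obtain ⟨r, ⟨_, hr⟩, hrP⟩ := hP
    have hχ : Primrec fun w : List.Vector ℕ (k + 1) => (decide (r (w.tail, w.head))).toNat :=
      (Primrec.dom_bool Bool.toNat).comp
        (hr.comp (Primrec.vector_tail.pair Primrec.vector_head))
    have hr₀ : IsSigma1Rel fun w : Option (Fin k) → ℕ =>
        ¬ r (List.Vector.ofFn fun i => w (some i), w none) :=
      (((IsSigma1Fun.of_primrec' (Nat.Primrec'.prim_iff.2 hχ)).subst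
        (g := fun j w => (Fin.cons (w none) fun i => w (some i) : Fin (k + 1) → ℕ) j)
        (Fin.cases (.var _) fun _ => .var _)).eq (.of_isTermFun .zero)).of_iff fun w => by simp
    exact (IsSigma1Rel.exists_nat (T := fun y v => ¬ r (List.Vector.ofFn v, y))
      hr₀).isSigmaRel.of_iff fun v => hrP _
  | succ m ih =>
    obtain ⟨r, hr, hrP⟩ := hP
    refine (IsSigmaRel.exists_not (T := fun y v => r (List.Vector.ofFn v, y)) ?_).of_iff
      fun v => hrP _
    exact (ih (hr.comp (Primrec.vector_tail.pair Primrec.vector_head))).subst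
      (f := fun j w => (Fin.cons (w none) fun i => w (some i) : Fin (k + 1) → ℕ) j)
      (Fin.cases (.var _) fun _ => .var _)

end Arithmetization

section Injection

open Filter

variable {n : ℕ}

/-- The pair `t = ⟨y, s⟩` witnesses that the partial `Σ_{n+1}` function of index `i` takes the
value `y` at `q`. -/
def IsValueWitness (n i q t : ℕ) : Prop :=
  ¬ UnivPred n i (Nat.pair (Nat.pair q t.unpair.1) t.unpair.2)

/-- The pairs `⟨t, i⟩` such that `i < a` and `t` is the least witness of a value of the partial
function of index `i` at `q`, that value being `u`. Only the least witness counts, so that `i`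
determines `u`. -/
def valueCodes (n q a u : ℕ) : Set ℕ :=
  {j | j.unpair.2 < a ∧ j.unpair.1.unpair.1 = u ∧
    IsLeast {t | IsValueWitness n j.unpair.2 q t} j.unpair.1}

/-- `i < a` is the index assigned to `u`, namely that of the least element of `valueCodes`. -/
def IsIndexOf (n q a u i : ℕ) : Prop :=
  ∃ j, IsLeast (valueCodes n q a u) j ∧ j.unpair.2 = i

namespace IsIndexOf

variable {q a u u' i i' : ℕ}

theorem index_unique (h : IsIndexOf n q a u i) (h' : IsIndexOf n q a u i') : i = i' := by
  obtain ⟨j, hj, rfl⟩ := h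
  obtain ⟨j', hj', rfl⟩ := h'
  rw [hj.unique hj']

theorem value_unique (h : IsIndexOf n q a u i) (h' : IsIndexOf n q a u' i) : u = u' := by
  obtain ⟨j, ⟨⟨-, rfl, hj⟩, -⟩, rfl⟩ := h
  obtain ⟨j', ⟨⟨-, rfl, hj'⟩, -⟩, hi⟩ := h'
  rw [hi] at hj'
  rw [hj.unique hj']

end IsIndexOf

theorem deltaPred_isLeast_isValueWitness (n : ℕ) : DeltaPred (n + 1) fun z : (ℕ × ℕ) × ℕ =>
    IsLeast {t | IsValueWitness n z.1.1 z.1.2 t} z.2 := by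
  have hz : DeltaFun (n + 1) fun z : (ℕ × ℕ) × ℕ => z.1 := .fst
  have ht : DeltaFun (n + 1) fun z : (ℕ × ℕ) × ℕ => z.2 := .snd
  exact DeltaPred.isLeast (ρ := fun z : (ℕ × ℕ) × ℕ => IsValueWitness n z.1.1 z.1.2 z.2)
    ((DeltaPred.of_sigmaPred (sigmaPred_univPred n)).comp ((DeltaFun.fst.comp hz).pair
      (((DeltaFun.snd.comp hz).natPair ht.unpair_fst).natPair ht.unpair_snd))).not

theorem deltaPred_mem_valueCodes (n : ℕ) : DeltaPred (n + 1) fun z : (ℕ × ℕ × ℕ) × ℕ =>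
    z.2 ∈ valueCodes n z.1.1 z.1.2.1 z.1.2.2 := by
  have hq : DeltaFun (n + 1) fun z : (ℕ × ℕ × ℕ) × ℕ => z.1.1 := DeltaFun.fst.comp .fst
  have hau : DeltaFun (n + 1) fun z : (ℕ × ℕ × ℕ) × ℕ => z.1.2 := DeltaFun.snd.comp .fst
  have hj : DeltaFun (n + 1) fun z : (ℕ × ℕ × ℕ) × ℕ => z.2 := .snd
  exact (DeltaPred.lt hj.unpair_snd (DeltaFun.fst.comp hau)).and
    ((DeltaPred.eq hj.unpair_fst.unpair_fst (DeltaFun.snd.comp hau)).and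
      ((deltaPred_isLeast_isValueWitness n).comp ((hj.unpair_snd.pair hq).pair hj.unpair_fst)))

theorem sigmaPred_isIndexOf (n : ℕ) : SigmaPred (n + 1) fun z : (ℕ × ℕ × ℕ) × ℕ =>
    IsIndexOf n z.1.1 z.1.2.1 z.1.2.2 z.2 := by
  have hz : DeltaFun (n + 1) fun z : ((ℕ × ℕ × ℕ) × ℕ) × ℕ => z.1 := .fst
  have hj : DeltaFun (n + 1) fun z : ((ℕ × ℕ × ℕ) × ℕ) × ℕ => z.2 := .snd
  exact SigmaPred.exists_nat (p := fun z : ((ℕ × ℕ × ℕ) × ℕ) × ℕ =>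
      IsLeast (valueCodes n z.1.1.1 z.1.1.2.1 z.1.1.2.2) z.2 ∧ z.2.unpair.2 = z.1.2)
    (((deltaPred_mem_valueCodes n).isLeast.comp ((DeltaFun.fst.comp hz).pair hj)).and
      (DeltaPred.eq hj.unpair_snd (DeltaFun.snd.comp hz))).1

theorem DeltaFun.exists_isIndexOf {f a : ℕ → ℕ} (hf : DeltaFun (n + 1) f)
    (ha : DeltaFun (n + 1) a) :
    ∃ e g, DeltaFun (n + 1) g ∧ ∀ x, e < a x → g x < a x ∧ IsIndexOf n x (a x) (f x) (g x) := by
  classical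
  obtain ⟨e, he⟩ := hf.exists_index
  have hwitness : ∀ x, ∃ t, IsValueWitness n e x t := fun x => by
    obtain ⟨s, hs⟩ := (he x _).1 rfl
    exact ⟨Nat.pair (f x) s, by rwa [IsValueWitness, Nat.unpair_pair]⟩
  have hvalue : ∀ x t, IsValueWitness n e x t → t.unpair.1 = f x := fun x t ht =>
    ((he x _).2 ⟨_, ht⟩).symm
  have hcode : ∀ x, e < a x → ∃ j, j ∈ valueCodes n x (a x) (f x) := fun x hx => by
    refine ⟨Nat.pair (Nat.find (hwitness x)) e, ?_⟩
    simpa only [valueCodes, Set.mem_ofPred_eq, Nat.unpair_pair] using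
      ⟨hx, hvalue x _ (Nat.find_spec (hwitness x)), Nat.isLeast_find (hwitness x)⟩
  obtain ⟨j, hj, hmin⟩ := (((DeltaPred.lt (.const e) (ha.comp .fst)).not).or
      ((deltaPred_mem_valueCodes n).comp ((DeltaFun.fst.pair
        ((ha.comp .fst).pair (hf.comp .fst))).pair .snd))).exists_isLeast fun x => by
    by_cases hx : e < a x
    · exact (hcode x hx).imp fun _ => Or.inr
    · exact ⟨0, Or.inl hx⟩
  refine ⟨e, fun x => (j x).unpair.2, hj.unpair_snd, fun x hx => ?_⟩
  have hmem : j x ∈ valueCodes n x (a x) (f x) := (hmin x).1.resolve_left (not_not_intro hx)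
  exact ⟨hmem.1, j x, ⟨hmem, fun _ hi => (hmin x).2 (Or.inr hi)⟩, rfl⟩

namespace GenericTower

variable (C : GenericTower n)

theorem exists_sigmaDef2_of_sigmaPred {R : ℕ → ℕ → ℕ → Prop}
    (hR : SigmaPred (n + 1) fun z : (ℕ × ℕ) × ℕ => R z.1.1 z.1.2 z.2) (k : ℕ) :
    ∃ F : C.Model → C.Model → Prop, SigmaDef2 (n + 1) C.Model F ∧
      (∀ u v f g, F u v → C.incl u = germ f → C.incl v = germ g →
        ∀ᶠ m in hyperfilter ℕ, R (C.gen k m) (f m) (g m)) ∧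
      ∀ f g hf hg D, DeltaPred (n + 1) D → (∀ᶠ m in hyperfilter ℕ, D (C.gen k m)) →
        (∀ x, D x → R x (f x) (g x)) → F (C.germAt k f hf) (C.germAt k g hg) := by
  have hR' : SigmaPred (n + 1) fun w : List.Vector ℕ 3 => R (w.get 2) (w.get 0) (w.get 1) :=
    hR.comp (((Primrec.vector_get.comp .id (.const 2)).pair
      (Primrec.vector_get.comp .id (.const 0))).pair (Primrec.vector_get.comp .id (.const 1)))
  obtain ⟨φ, hφ, hφR⟩ := hR'.isSigmaRel (Fin 2 ⊕ Fin 1) 0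
    ![Term.var (.inl (.inl 0)), Term.var (.inl (.inl 1)), Term.var (.inl (.inr 0))]
  replace hφR : ∀ f g q : ℕ, RealizeNat φ (Sum.elim ![f, g] fun _ => q) finZeroElim ↔ R q f g :=
    fun f g q => hφR _ _
  let q : Fin 1 → C.Model := fun _ => C.germAt k (fun x => x) .id
  refine ⟨fun u v => φ.Realize (Sum.elim ![u, v] q) finZeroElim, ⟨1, φ, q, hφ, fun v => ?_⟩,
    fun u v f g H hu hv => ?_, fun f g hf hg D hD hDk H => ?_⟩
  · rw [List.ofFn_injective (show List.ofFn v = List.ofFn ![v 0, v 1] from rfl)]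
    rfl
  · have hfree : C.incl ∘ Sum.elim ![u, v] q =
        fun i => germ ((Sum.elim ![f, g] fun _ => C.gen k : Fin 2 ⊕ Fin 1 → ℕ → ℕ) i) :=
      funext (Sum.rec (Fin.forall_fin_two.2 ⟨hu, hv⟩) fun _ => rfl)
    have hbound : C.incl ∘ finZeroElim = fun i => germ ((finZeroElim : Fin 0 → ℕ → ℕ) i) :=
      Subsingleton.elim _ _
    have hHyper := hφ.realize_incl H
    rw [hfree, hbound, realize_germ] at hHyper
    refine hHyper.mono fun m hm => (hφR _ _ _).1 ?_
    convert hm using 1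
    exact funext (Sum.rec (Fin.forall_fin_two.2 ⟨rfl, rfl⟩) fun _ => rfl)
  · refine hφ.realize_of_forall (f := Sum.elim ![f, g] fun _ x => x) (g := finZeroElim) hD hDk
      ?_ ?_ (fun i => i.elim0) (fun i => i.elim0) fun x hx => ?_
    · exact Sum.rec (Fin.forall_fin_two.2 ⟨hf, hg⟩) fun _ => .id
    · exact Sum.rec (Fin.forall_fin_two.2 ⟨rfl, rfl⟩) fun _ => rfl
    · convert (hφR (f x) (g x) x).2 (H x hx) using 1
      exact funext (Sum.rec (Fin.forall_fin_two.2 ⟨rfl, rfl⟩) fun _ => rfl)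

theorem exSigmaInj_model (b : C.Model) :
    ExSigmaInj C.Model (n + 1) b (C.germAt 0 (fun x => x) .id) := by
  obtain ⟨k, hk⟩ := exists_forall_lt_incl_mem_level b
  obtain ⟨a, ha, hgen⟩ := C.exists_lift k.zero_le DeltaFun.id
  have hbase : C.germAt 0 (fun x => x) .id = C.germAt k a ha :=
    C.incl.injective (congrArg germ (funext hgen))
  have htendsto : Tendsto (fun m => a (C.gen k m)) (hyperfilter ℕ) atTop := by
    simp only [← hgen, C.gen_zero]
    exact tendsto_id.mono_left Nat.hyperfilter_le_atTop
  have hx : DeltaFun (n + 1) fun z : (ℕ × ℕ) × ℕ => z.1.1 := DeltaFun.fst.comp .fst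
  obtain ⟨F, hF, hFR, hRF⟩ := C.exists_sigmaDef2_of_sigmaPred (k := k)
    (R := fun x u i => IsIndexOf n x (a x) u i)
    ((sigmaPred_isIndexOf n).comp_deltaFun
      ((hx.pair ((ha.comp hx).pair (DeltaFun.snd.comp .fst))).pair .snd))
  rw [hbase]
  refine ⟨F, hF, fun u hu => ?_, fun u v v' _ h h' => ?_, fun u u' v _ _ h h' => ?_⟩
  · obtain ⟨f, hf, hfu⟩ := hk k le_rfl u hu
    obtain rfl : u = C.germAt k f hf := C.incl.injective hfu
    obtain ⟨e, g, hg, hge⟩ := hf.exists_isIndexOf ha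
    have he : ∀ᶠ m in hyperfilter ℕ, e < a (C.gen k m) := htendsto.eventually_gt_atTop e
    refine ⟨C.germAt k g hg, (germAt_lt_germAt hg ha).2 (he.mono fun m hm => (hge _ hm).1), ?_⟩
    exact hRF f g hf hg _ (.lt (.const e) ha) he fun x hx => (hge x hx).2
  · obtain ⟨K, -, f, -, hf⟩ := exists_incl_eq_germ ![u, v, v'] 0
    refine C.incl.injective ((hf 1).trans ((germ_eq_germ.2 ?_).trans (hf 2).symm))
    filter_upwards [hFR u v _ _ h (hf 0) (hf 1), hFR u v' _ _ h' (hf 0) (hf 2)] with m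
      using IsIndexOf.index_unique
  · obtain ⟨K, -, f, -, hf⟩ := exists_incl_eq_germ ![u, u', v] 0
    refine C.incl.injective ((hf 0).trans ((germ_eq_germ.2 ?_).trans (hf 1).symm))
    filter_upwards [hFR u v _ _ h (hf 0) (hf 2), hFR u' v _ _ h' (hf 1) (hf 2)] with m
      using IsIndexOf.value_unique

end GenericTower

end Injection

theorem statement_11_general (n : ℕ) :
    ∃ (N : Type) (_ : lang.Structure N), PAm N ∧ ISig n N ∧ CARD N (n + 1) ∧
      ∃ a : N, ∀ b : N, ExSigmaInj N (n + 1) b a := by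
  obtain ⟨C⟩ := exists_genericTower n
  exact ⟨C.Model, inferInstance, C.pam_model, C.isig_model, C.card_model, _, C.exSigmaInj_model⟩

/-- For every `n ≥ 1`, PA⁻ + IΣn + CARD(Σ_{n+1}) does not prove
GPHP(Σ_{n+1}): there is a model `N` of PA⁻ + IΣn + CARD(Σ_{n+1}) and `a ∈ N` such
that for every `b` there is a Σ_{n+1}-definable injection from `[0,b)` into `[0,a)`. -/
theorem statement_11 (n : ℕ) (hn : 1 ≤ n) :
    ∃ (N : Type) (_ : lang.Structure N), PAm N ∧ ISig n N ∧ CARD N (n + 1) ∧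
      ∃ a : N, ∀ b : N, ExSigmaInj N (n + 1) b a :=
  statement_11_general n

end ArithFC
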